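/- arXiv:1308.5517 — 6 statements merged into one kernel-verified Lean document; each statement's English description precedes it below -/
import Mathlib

section
/- Every local class of finite Σ-structures enjoys the Adoptive Property. -/
open FirstOrder FirstOrder.Language

universe u v

/-- A finite structure for a relational signature `L`, with underlying set a finite subset of `ℕ`,
given by its relation interpretations (sets of tuples of natural numbers). -/
structure FinStruc (L : FirstOrder.Language.{u, v}) where
  carrier : Finset ℕ
  rel : ∀ ⦃n : ℕ⦄, L.Relations n → Set (Fin n → ℕ)
  rel_mem : ∀ ⦃n : ℕ⦄ (R : L.Relations n) (t : Fin n → ℕ), t ∈ rel R → ∀ i, t i ∈ carrier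

variable {L : FirstOrder.Language.{u, v}}

/-- The first-order structure on the underlying set of a `FinStruc`. -/
instance FinStruc.str [L.IsRelational] (A : FinStruc L) :
    L.Structure {x : ℕ // x ∈ A.carrier} where
  funMap := fun f _ => isEmptyElim f
  RelMap := fun {n} R t => (fun i => (t i : ℕ)) ∈ A.rel R

/-- Satisfaction of a sentence in a `FinStruc`. -/
def FinStruc.Sat [L.IsRelational] (A : FinStruc L) (φ : L.Sentence) : Prop :=
  {x : ℕ // x ∈ A.carrier} ⊨ φ

/-- The General Irreflexivity axiom for a relation symbol `R` and coordinates `i`, `j`: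
`∀ x₁ … xₙ, R (x₁, …, xₙ) → ¬ (xᵢ = xⱼ)`. -/
def giSentence {n : ℕ} (R : L.Relations n) (i j : Fin n) : L.Sentence :=
  BoundedFormula.alls
    ((Relations.boundedFormula R fun k => Term.var (Sum.inr k)).imp
      (Term.bdEqual (Term.var (Sum.inr i)) (Term.var (Sum.inr j))).not)

/-- The General Irreflexivity axiom schema `Φ^Σ_GI`. -/
def GITheory (L : FirstOrder.Language.{u, v}) : L.Theory :=
  { φ | ∃ (n : ℕ) (R : L.Relations n) (i j : Fin n), i ≠ j ∧ φ = giSentence R i j }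

/-- A sentence is local if it has the form `∀ x₁ … xₘ, R (x₁, …, xₘ) → ψ` with `m > 0` and
`ψ` quantifier-free. -/
def IsLocalSentence (φ : L.Sentence) : Prop :=
  ∃ m : ℕ, 0 < m ∧ ∃ (R : L.Relations m) (ψ : L.BoundedFormula Empty m), ψ.IsQF ∧
    φ = BoundedFormula.alls ((Relations.boundedFormula R fun k => Term.var (Sum.inr k)).imp ψ)

/-- A class of finite structures is local if it is the class of models of a set of local
sentences containing the General Irreflexivity axioms. -/
def IsLocalClass [L.IsRelational] (K : Set (FinStruc L)) : Prop :=
  ∃ Φ : L.Theory, (∀ φ ∈ Φ, IsLocalSentence φ) ∧ GITheory L ⊆ Φ ∧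
    K = { A : FinStruc L | ∀ φ ∈ Φ, A.Sat φ }

/-- The `n`-frame of a structure: same underlying set, same interpretations of relation symbols
of arity at most `n`, empty interpretation of all higher-arity relation symbols. -/
def FinStruc.frame (A : FinStruc L) (n : ℕ) : FinStruc L where
  carrier := A.carrier
  rel := fun m R => if m ≤ n then A.rel R else ∅
  rel_mem := by
    intro m R t ht i
    by_cases h : m ≤ n
    · exact A.rel_mem R t (by simpa [h] using ht) i
    · simp [h] at ht

/-- The induced substructure of `B` on a finite set `X`. -/
def FinStruc.restrict (B : FinStruc L) (X : Finset ℕ) : FinStruc L where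
  carrier := B.carrier ∩ X
  rel := fun _ R => { t | t ∈ B.rel R ∧ ∀ i, t i ∈ X }
  rel_mem := fun _ R t ht i => Finset.mem_inter.2 ⟨B.rel_mem R t ht.1 i, ht.2 i⟩

/-- `A` is the induced substructure of `B` on the subset `A.carrier` of `B.carrier`. -/
def FinStruc.IsInducedSub (A B : FinStruc L) : Prop :=
  A.carrier ⊆ B.carrier ∧
    ∀ ⦃n : ℕ⦄ (R : L.Relations n) (t : Fin n → ℕ),
      (∀ i, t i ∈ A.carrier) → (t ∈ A.rel R ↔ t ∈ B.rel R)

/-- `A` is isomorphic to `B`: there is a bijection of the underlying sets preserving all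
relations in both directions. -/
def FinStruc.IsIsoTo (A B : FinStruc L) : Prop :=
  ∃ f : ℕ → ℕ, Set.BijOn f ↑A.carrier ↑B.carrier ∧
    ∀ ⦃n : ℕ⦄ (R : L.Relations n) (t : Fin n → ℕ), (∀ i, t i ∈ A.carrier) →
      (t ∈ A.rel R ↔ (fun i => f (t i)) ∈ B.rel R)

/-- The Adoptive Property. -/
def AdoptiveProperty (K : Set (FinStruc L)) : Prop :=
  ∀ (n : ℕ) (B A A' : FinStruc L), B ∈ K → A ∈ K → A' ∈ K →
    A.IsInducedSub B → A.carrier.card = n → A'.carrier = A.carrier →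
    A'.frame (n - 1) = A.frame (n - 1) →
    ∃ B' ∈ K, B'.carrier = B.carrier ∧ B'.frame (n - 1) = B.frame (n - 1) ∧
      ∀ R : L.Relations n,
        B'.rel R = (B.rel R \ { t | ∀ i, t i ∈ A.carrier }) ∪ A'.rel R

/-- A structure for `L` with underlying set `ℕ`, given by its relation interpretations. -/
structure InfStruc (L : FirstOrder.Language.{u, v}) where
  rel : ∀ ⦃n : ℕ⦄, L.Relations n → Set (Fin n → ℕ)

/-- The first-order structure on `ℕ` determined by an `InfStruc`. -/
def InfStruc.str [L.IsRelational] (M : InfStruc L) : L.Structure ℕ where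
  funMap := fun f _ => isEmptyElim f
  RelMap := fun {n} R t => t ∈ M.rel R

/-- Satisfaction of a sentence in an `InfStruc`. -/
def InfStruc.Sat [L.IsRelational] (M : InfStruc L) (φ : L.Sentence) : Prop :=
  @FirstOrder.Language.Sentence.Realize L ℕ M.str φ

/-- The induced finite substructure of an `InfStruc` on a finite set `X`. -/
def InfStruc.restrict (M : InfStruc L) (X : Finset ℕ) : FinStruc L where
  carrier := X
  rel := fun _ R => { t | t ∈ M.rel R ∧ ∀ i, t i ∈ X }
  rel_mem := fun _ _ _ ht i => ht.2 i

/-- The bundled structures isomorphic to a member of `K`. -/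
def toBundled (L : FirstOrder.Language.{u, v}) [L.IsRelational] (K : Set (FinStruc L)) :
    Set (CategoryTheory.Bundled.{0} L.Structure) :=
  { M | ∃ A ∈ K, Nonempty (M ≃[L] {x : ℕ // x ∈ A.carrier}) }

/-- `K^{X,l}_{A,k}`: the set of `l`-frames of members `B` of `K` with underlying set `X` whose
`k`-frame restricted to the underlying set of `A` is the `k`-frame of `A`. -/
def KsetFr (K : Set (FinStruc L)) (X : Finset ℕ) (l : ℕ) (A : FinStruc L) (k : ℕ) :
    Set (FinStruc L) :=
  { F | ∃ B ∈ K, B.carrier = X ∧ (B.frame k).restrict A.carrier = A.frame k ∧ F = B.frame l }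

/-- `N(S,k)`: the number of distinct `(k+1)`-frames of members of `K` on the underlying set of `S`
whose `k`-frame is the `k`-frame of `S`. -/
noncomputable def Ncount (K : Set (FinStruc L)) (S : FinStruc L) (k : ℕ) : ℕ :=
  (KsetFr K S.carrier (k + 1) S k).ncard

theorem fs_qf_transfer [L.IsRelational] (A B : FinStruc L) {m : ℕ} (ψ : L.BoundedFormula Empty m)
    (hψ : ψ.IsQF) (a : Fin m → {x : ℕ // x ∈ A.carrier}) (b : Fin m → {x : ℕ // x ∈ B.carrier})
    (hab : ∀ i, (a i : ℕ) = b i)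
    (h : ∀ (k : ℕ) (Q : L.Relations k) (s : Fin k → Fin m),
      (fun i => (a (s i) : ℕ)) ∈ A.rel Q ↔ (fun i => (a (s i) : ℕ)) ∈ B.rel Q)
    (va : Empty → {x : ℕ // x ∈ A.carrier}) (vb : Empty → {x : ℕ // x ∈ B.carrier}) :
    ψ.Realize va a ↔ ψ.Realize vb b := by
  have hterm : ∀ t : L.Term (Empty ⊕ Fin m), ∃ i : Fin m, t = Term.var (Sum.inr i) := by
    intro t
    cases t with
    | var x =>
      rcases x with x | x
      · exact x.elim
      · exact ⟨x, rfl⟩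
    | func f _ => exact isEmptyElim f
  induction hψ with
  | falsum => exact Iff.rfl
  | of_isAtomic hat =>
    cases hat with
    | equal t₁ t₂ =>
      obtain ⟨i, rfl⟩ := hterm t₁
      obtain ⟨j, rfl⟩ := hterm t₂
      rw [BoundedFormula.realize_bdEqual, BoundedFormula.realize_bdEqual]
      change a i = a j ↔ b i = b j
      rw [Subtype.ext_iff, Subtype.ext_iff, hab i, hab j]
    | rel R ts =>
      choose s hs using fun i => hterm (ts i)
      obtain rfl : ts = fun i => Term.var (Sum.inr (s i)) := funext hs
      have h1 := h _ R s
      have h2 : (fun i => (a (s i) : ℕ)) = fun i => (b (s i) : ℕ) := funext fun i => hab _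
      rw [BoundedFormula.realize_rel, BoundedFormula.realize_rel]
      change (fun i => (a (s i) : ℕ)) ∈ A.rel R ↔ (fun i => (b (s i) : ℕ)) ∈ B.rel R
      rw [← h2]
      exact h1
  | imp _ _ ih1 ih2 =>
    rw [BoundedFormula.realize_imp, BoundedFormula.realize_imp]
    exact imp_congr ih1 ih2

theorem fs_sat_iff [L.IsRelational] (A : FinStruc L) {m : ℕ} (R : L.Relations m)
    (ψ : L.BoundedFormula Empty m) :
    A.Sat (BoundedFormula.alls
      ((Relations.boundedFormula R fun k => Term.var (Sum.inr k)).imp ψ)) ↔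
    ∀ xs : Fin m → {x : ℕ // x ∈ A.carrier}, (fun i => (xs i : ℕ)) ∈ A.rel R →
      ψ.Realize default xs := by
  unfold FinStruc.Sat Sentence.Realize
  rw [BoundedFormula.realize_alls]
  exact Iff.rfl

theorem fs_mem_of_local [L.IsRelational] (Φ : L.Theory) (hΦ : ∀ φ ∈ Φ, IsLocalSentence φ)
    (B : FinStruc L)
    (h : ∀ (m : ℕ) (R : L.Relations m) (t : Fin m → ℕ), 0 < m → t ∈ B.rel R →
      ∃ C : FinStruc L, (∀ φ ∈ Φ, C.Sat φ) ∧ t ∈ C.rel R ∧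
        ∀ (k : ℕ) (Q : L.Relations k) (s : Fin k → Fin m),
          (fun i => t (s i)) ∈ B.rel Q ↔ (fun i => t (s i)) ∈ C.rel Q) :
    ∀ φ ∈ Φ, B.Sat φ := by
  intro φ hφ
  obtain ⟨m, hm, R, ψ, hψ, rfl⟩ := hΦ φ hφ
  rw [fs_sat_iff]
  intro xs hxs
  obtain ⟨C, hC, htC, hag⟩ := h m R _ hm hxs
  have h1 := (fs_sat_iff C R ψ).1 (hC _ hφ) (fun i => ⟨xs i, C.rel_mem R _ htC i⟩) htC
  exact (fs_qf_transfer B C ψ hψ xs _ (fun i => rfl) hag _ _).2 h1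

theorem fs_inj [L.IsRelational] (Φ : L.Theory) (hΦ : GITheory L ⊆ Φ)
    (B : FinStruc L) (hB : ∀ φ ∈ Φ, B.Sat φ) {m : ℕ} (R : L.Relations m) (t : Fin m → ℕ)
    (ht : t ∈ B.rel R) : Function.Injective t := by
  intro i j hij
  by_contra hne
  have h1 := hB _ (hΦ ⟨m, R, i, j, hne, rfl⟩)
  have h2 := (fs_sat_iff B R _).1 h1 (fun i => ⟨t i, B.rel_mem R _ ht i⟩) ht
  rw [BoundedFormula.realize_not] at h2
  apply h2
  simp [hij]

open Classical in
/-- Replacing the relations on a subset by those of another structure on it. -/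
def fsAdopt (n : ℕ) (B A A' : FinStruc L) (hc : A'.carrier = A.carrier)
    (hs : A.carrier ⊆ B.carrier) : FinStruc L where
  carrier := B.carrier
  rel := fun m R => { t | m ≤ n ∧ if ∀ i, t i ∈ A.carrier then t ∈ A'.rel R else t ∈ B.rel R }
  rel_mem := by
    rintro m R t ⟨_, ht⟩ i
    split_ifs at ht with h
    · exact hs (h i)
    · exact B.rel_mem R t ht i

theorem fs_frame_eq {A B : FinStruc L} {n m : ℕ} (h : A.frame n = B.frame n) (hm : m ≤ n)
    (R : L.Relations m) : A.rel R = B.rel R := by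
  have h1 : (A.frame n).rel R = (B.frame n).rel R := by rw [h]
  simpa [FinStruc.frame, hm] using h1

theorem fs_ext {A B : FinStruc L} (hc : A.carrier = B.carrier)
    (h : ∀ (m : ℕ) (R : L.Relations m), A.rel R = B.rel R) : A = B := by
  cases A; cases B
  simp only at hc h
  subst hc
  congr
  funext m R
  exact h m R

/-- Every local class enjoys the Adoptive Property. -/
theorem statement_4 (L : FirstOrder.Language.{u, v}) [L.IsRelational]
    [∀ n, Finite (L.Relations n)] (K : Set (FinStruc L)) (hK : IsLocalClass K) :
    AdoptiveProperty K := by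
  obtain ⟨Φ, hloc, hGI, rfl⟩ := hK
  intro n B A A' hB hA hA' hsub hcard hc hfr
  have hlow : ∀ (k : ℕ) (Q : L.Relations k) (t : Fin k → ℕ), k ≤ n - 1 →
      (∀ i, t i ∈ A.carrier) → (t ∈ A'.rel Q ↔ t ∈ B.rel Q) := by
    intro k Q t hk ht
    rw [fs_frame_eq hfr hk Q]
    exact hsub.2 Q t ht
  refine ⟨fsAdopt n B A A' hc hsub.1, ?_, rfl, ?_, ?_⟩
  · refine fs_mem_of_local Φ hloc _ ?_
    rintro m R t hm ⟨hmn, ht⟩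
    split_ifs at ht with htA
    · refine ⟨A', hA', ht, ?_⟩
      intro k Q s
      have hsA : ∀ i, t (s i) ∈ A.carrier := fun i => htA _
      simp only [fsAdopt, Set.mem_setOf_eq, hsA, implies_true, if_true, and_iff_right_iff_imp]
      intro hQ
      have hinj := fs_inj Φ hGI A' hA' Q _ hQ
      have := Finset.card_le_card_of_injOn (s := Finset.univ) (t := A.carrier)
        (fun i => t (s i)) (fun i _ => hsA i) hinj.injOn
      simpa [hcard] using this
    · refine ⟨B, hB, ht, ?_⟩
      intro k Q s
      have hle : Function.Injective (fun i => t (s i)) → k ≤ m := by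
        intro hi
        have h2 : Function.Injective s := Function.Injective.of_comp (f := t) hi
        simpa using Fintype.card_le_of_injective s h2
      simp only [fsAdopt, Set.mem_setOf_eq]
      split_ifs with hsA
      · by_cases hk : k ≤ n - 1
        · rw [hlow k Q _ hk hsA]
          exact and_iff_right (by omega)
        · have key : ¬ Function.Injective (fun i => t (s i)) := by
            intro hi
            have hkm : k = m := by have := hle hi; omega
            subst hkm
            have h2 : Function.Injective s := Function.Injective.of_comp (f := t) hi
            have h3 := Finite.surjective_of_injective h2
            exact htA fun i => by obtain ⟨j, rfl⟩ := h3 i; exact hsA j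
          exact ⟨fun h => (key (fs_inj Φ hGI A' hA' Q _ h.2)).elim,
            fun h => (key (fs_inj Φ hGI B hB Q _ h)).elim⟩
      · exact and_iff_right_of_imp fun h => (hle (fs_inj Φ hGI B hB Q _ h)).trans hmn
  · refine fs_ext rfl ?_
    intro m R
    simp only [FinStruc.frame]
    split_ifs with hm
    · ext t
      simp only [fsAdopt, Set.mem_setOf_eq]
      split_ifs with htA
      · rw [hlow m R t hm htA]
        exact and_iff_right (by omega)
      · exact and_iff_right (by omega)
    · rfl
  · intro R
    ext t
    have := A'.rel_mem R t
    rw [hc] at this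
    simp only [fsAdopt, Set.mem_setOf_eq, Set.mem_union, Set.mem_diff]
    split_ifs with htA <;> tauto
end

section
/- Let K be a local class of finite Σ-structures, let R be the Fraïssé limit of K, and let Th(R) be the complete first-order theory of R. Then Th(R) has quantifier elimination: for every first-order formula φ over Σ with free variables x_1,…,x_n there is a quantifier-free formula ψ with free variables among x_1,…,x_n such that ∀x_1…∀x_n (φ ↔ ψ) belongs to Th(R). -/
open FirstOrder FirstOrder.Language

universe u v

variable {L : FirstOrder.Language.{u, v}}

theorem aux_isQF_iSup {L : FirstOrder.Language.{u, v}} {α : Type*} {β : Type*} [Finite β] {n : ℕ}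
    (f : β → L.BoundedFormula α n) (hf : ∀ b, (f b).IsQF) : (BoundedFormula.iSup f).IsQF := by
  classical
  unfold BoundedFormula.iSup
  dsimp only
  generalize (@Finset.univ β (Fintype.ofFinite β)).toList = l
  induction l with
  | nil => exact BoundedFormula.isQF_bot
  | cons a l ih => exact (hf a).sup ih

theorem aux_isQF_iInf {L : FirstOrder.Language.{u, v}} {α : Type*} {β : Type*} [Finite β] {n : ℕ}
    (f : β → L.BoundedFormula α n) (hf : ∀ b, (f b).IsQF) : (BoundedFormula.iInf f).IsQF := by
  classical
  unfold BoundedFormula.iInf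
  dsimp only
  generalize (@Finset.univ β (Fintype.ofFinite β)).toList = l
  induction l with
  | nil => exact BoundedFormula.IsQF.top
  | cons a l ih => exact (hf a).inf ih

/-- General irreflexivity holds in the limit. -/
theorem aux_gi (L : FirstOrder.Language.{u, v}) [L.IsRelational]
    [Countable (Σ l, L.Functions l)]
    (K : Set (FinStruc L)) (hK : IsLocalClass K)
    (R : Type) [L.Structure R] [Countable R]
    (hR : IsFraisseLimit (toBundled L K) R)
    {m : ℕ} (r : L.Relations m) (t : Fin m → R) (h : Structure.RelMap r t) :
    Function.Injective t := by
  obtain ⟨Φ, -, hGI, rfl⟩ := hK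
  let S : L.Substructure R := Substructure.closure L (Set.range t)
  have hS : S.FG := Substructure.fg_closure (Set.finite_range t)
  have hmem := age.fg_substructure hS
  rw [hR.age] at hmem
  obtain ⟨A, hA, ⟨e⟩⟩ := hmem
  have e' : S ≃[L] {x : ℕ // x ∈ A.carrier} := e
  let t' : Fin m → S := fun i => ⟨t i, Substructure.subset_closure ⟨i, rfl⟩⟩
  have ht' : Structure.RelMap r t' := h
  intro i j hij
  by_contra hne
  have hs : A.Sat (giSentence r i j) := hA _ (hGI ⟨m, r, i, j, hne, rfl⟩)
  unfold FinStruc.Sat giSentence Sentence.Realize at hs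
  rw [BoundedFormula.realize_alls] at hs
  have h2 := hs (e' ∘ t')
  simp only [BoundedFormula.realize_imp, BoundedFormula.realize_rel, BoundedFormula.realize_not,
    BoundedFormula.realize_bdEqual, Term.realize_var, Sum.elim_inr] at h2
  refine h2 ((e'.map_rel r t').2 ht') ?_
  have : t' i = t' j := Subtype.ext hij
  simp [this]

/-- Index type for the atomic formulas of bounded arity. -/
abbrev AuxIdx (L : FirstOrder.Language.{u, v}) (n : ℕ) : Type v :=
  (Σ m : Fin (n + 1), L.Relations m × (Fin m → Fin n)) ⊕ (Fin n × Fin n)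

/-- The atomic formulas of bounded arity. -/
def auxAt (L : FirstOrder.Language.{u, v}) (n : ℕ) : AuxIdx L n → L.Formula (Fin n)
  | Sum.inl ⟨_, r, f⟩ => r.formula fun k => Term.var (f k)
  | Sum.inr (i, j) => Term.equal (Term.var i) (Term.var j)

theorem auxAt_isQF (L : FirstOrder.Language.{u, v}) (n : ℕ) (i : AuxIdx L n) :
    BoundedFormula.IsQF (auxAt L n i) := by
  rcases i with ⟨m, r, f⟩ | ⟨i, j⟩
  · exact (BoundedFormula.IsAtomic.rel _ _).isQF
  · exact (BoundedFormula.IsAtomic.equal _ _).isQF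

/-- Tuples with the same atomic type satisfy the same formulas. -/
theorem aux_key (L : FirstOrder.Language.{u, v}) [L.IsRelational]
    (R : Type) [L.Structure R]
    (hU : IsUltrahomogeneous L R)
    (hgi : ∀ {m : ℕ} (r : L.Relations m) (t : Fin m → R), Structure.RelMap r t →
      Function.Injective t)
    (n : ℕ) (φ : L.Formula (Fin n)) (v w : Fin n → R)
    (h : ∀ i, (auxAt L n i).Realize v ↔ (auxAt L n i).Realize w) :
    φ.Realize v ↔ φ.Realize w := by
  have heq : ∀ i j, v i = v j ↔ w i = w j := by
    intro i j
    simpa [auxAt] using h (Sum.inr (i, j))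
  have hle : ∀ {m : ℕ} (r : L.Relations m) (u : Fin n → R) (f : Fin m → Fin n),
      Structure.RelMap r (u ∘ f) → m ≤ n := by
    intro m r u f hr
    simpa using Fintype.card_le_of_injective f (hgi r _ hr).of_comp
  have hrel : ∀ {m : ℕ} (r : L.Relations m) (f : Fin m → Fin n),
      Structure.RelMap r (v ∘ f) ↔ Structure.RelMap r (w ∘ f) := by
    intro m r f
    by_cases hm : m ≤ n
    · have := h (Sum.inl ⟨⟨m, Nat.lt_succ_of_le hm⟩, r, f⟩)
      simp only [auxAt, Formula.realize_rel, Term.realize_var] at this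
      exact this
    · exact ⟨fun h => absurd (hle r v f h) hm, fun h => absurd (hle r w f h) hm⟩
  let S : L.Substructure R := Substructure.closure L (Set.range v)
  have hS : S.FG := Substructure.fg_closure (Set.finite_range v)
  have hmem : ∀ x : S, ∃ i, v i = x := fun x => by
    simpa using (Substructure.mem_closure_iff_of_isRelational L (Set.range v) (x : R)).1 x.2
  choose c hc using hmem
  let F : S ↪[L] R :=
    { toFun := fun x => w (c x)
      inj' := by
        intro x y hxy
        apply Subtype.ext
        rw [← hc x, ← hc y]
        exact (heq _ _).2 hxy
      map_fun' := fun f _ => isEmptyElim f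
      map_rel' := by
        intro m r x
        have h1 : (fun i => ((x i : S) : R)) = v ∘ (fun i => c (x i)) := by
          funext i
          exact (hc (x i)).symm
        have h2 : Structure.RelMap r x ↔ Structure.RelMap r (fun i => ((x i : S) : R)) := Iff.rfl
        rw [h2, h1, hrel]
        rfl }
  obtain ⟨g, hg⟩ := hU S hS F
  have hgv : g ∘ v = w := by
    funext i
    let x : S := ⟨v i, Substructure.subset_closure ⟨i, rfl⟩⟩
    have h1 : F x = g (v i) := by rw [hg]; rfl
    have h2 : F x = w (c x) := rfl
    have h3 : w (c x) = w i := (heq _ _).1 (hc x)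
    rw [Function.comp_apply, ← h1, h2, h3]
  rw [← hgv, StrongHomClass.realize_formula]

/-- The complete theory of the Fraïssé limit of a local class has quantifier elimination: every
formula is equivalent, in the Fraïssé limit, to a quantifier-free formula in the same free
variables. -/
theorem statement_7 (L : FirstOrder.Language.{u, v}) [L.IsRelational]
    [∀ n, Finite (L.Relations n)] [Countable (Σ l, L.Functions l)]
    (K : Set (FinStruc L)) (hK : IsLocalClass K)
    (R : Type) [L.Structure R] [Countable R]
    (hR : IsFraisseLimit (toBundled L K) R)
    (n : ℕ) (φ : L.Formula (Fin n)) :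
    ∃ ψ : L.Formula (Fin n), BoundedFormula.IsQF ψ ∧
      ∀ v : Fin n → R, φ.Realize v ↔ ψ.Realize v := by
  classical
  have hkey := aux_key L R hR.ultrahomogeneous (aux_gi L K hK R hR) n φ
  let P : Set (AuxIdx L n) → Prop := fun s =>
    ∃ v : Fin n → R, φ.Realize v ∧ ∀ i, i ∈ s ↔ (auxAt L n i).Realize v
  let lit : Set (AuxIdx L n) → AuxIdx L n → L.Formula (Fin n) := fun s i =>
    if i ∈ s then auxAt L n i else (auxAt L n i).not
  have hlit : ∀ s i (v : Fin n → R),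
      (lit s i).Realize v ↔ (i ∈ s ↔ (auxAt L n i).Realize v) := by
    intro s i v
    by_cases hi : i ∈ s <;> simp [lit, hi]
  refine ⟨Formula.iSup (fun s : {s // P s} => Formula.iInf (lit s.1)), ?_, ?_⟩
  · refine aux_isQF_iSup _ fun s => aux_isQF_iInf _ fun i => ?_
    by_cases hi : i ∈ s.1
    · simpa [lit, hi] using auxAt_isQF L n i
    · simpa [lit, hi] using (auxAt_isQF L n i).not
  · intro v
    simp only [Formula.realize_iSup, Formula.realize_iInf, hlit]
    constructor
    · intro hv
      exact ⟨⟨{i | (auxAt L n i).Realize v}, v, hv, fun i => Iff.rfl⟩, fun i => Iff.rfl⟩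
    · rintro ⟨⟨s, w, hw, hs⟩, hv⟩
      exact (hkey v w fun i => (hv i).symm.trans (hs i)).2 hw
end

section
/- Let K be a local class of finite Σ-structures. Suppose S ∈ K, A is an induced substructure of S with A ∈ K, and 1 ≤ k ≤ |A|. Then for all A' ∈ K^{|A|,k}_{A,k−1} one has ‖K^{|S|,k}_{S,k−1} ∩ K^{|S|,k}_{A',k}‖ = ‖K^{|S|,k}_{S,k−1} ∩ K^{|S|,k}_{A,k}‖; in particular ‖K^{|S|,k}_{S,k−1}‖ = N(A,k−1) · ‖K^{|S|,k}_{S,k−1} ∩ K^{|S|,k}_{A,k}‖. -/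
open FirstOrder FirstOrder.Language

universe u v

variable {L : FirstOrder.Language.{u, v}}

theorem FinStruc.ext9 {A B : FinStruc L} (h : A.carrier = B.carrier)
    (h2 : ∀ n (R : L.Relations n) (t : Fin n → ℕ), t ∈ A.rel R ↔ t ∈ B.rel R) : A = B := by
  cases A with
  | mk c r p =>
    cases B with
    | mk c' r' p' =>
      obtain rfl : c = c' := h
      obtain rfl : r = r' := by
        funext n R
        exact Set.ext (h2 n R)
      rfl

theorem term_is_var9 [L.IsRelational] {m : ℕ} (t : L.Term (Empty ⊕ Fin m)) :
    ∃ i : Fin m, t = Term.var (Sum.inr i) := by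
  cases t with
  | var x =>
    rcases x with e | i
    · exact e.elim
    · exact ⟨i, rfl⟩
  | func f _ => exact isEmptyElim f

theorem qf_transfer9 [L.IsRelational] {m : ℕ} (ψ : L.BoundedFormula Empty m) (hψ : ψ.IsQF)
    (B C : FinStruc L) (xs : Fin m → {x : ℕ // x ∈ B.carrier})
    (ys : Fin m → {x : ℕ // x ∈ C.carrier}) (hxy : ∀ i, (xs i : ℕ) = ys i)
    (h : ∀ n (Q : L.Relations n) (s : Fin n → Fin m),
      ((fun i => (xs (s i) : ℕ)) ∈ B.rel Q ↔ (fun i => (xs (s i) : ℕ)) ∈ C.rel Q))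
    (v : Empty → {x : ℕ // x ∈ B.carrier}) (w : Empty → {x : ℕ // x ∈ C.carrier}) :
    ψ.Realize v xs ↔ ψ.Realize w ys := by
  induction hψ with
  | falsum => exact Iff.rfl
  | of_isAtomic ha =>
    cases ha with
    | equal t₁ t₂ =>
      obtain ⟨i, rfl⟩ := term_is_var9 t₁
      obtain ⟨j, rfl⟩ := term_is_var9 t₂
      simp only [BoundedFormula.realize_bdEqual, Term.realize_var, Sum.elim_inr,
        Subtype.ext_iff, hxy]
    | rel R ts =>
      choose s hs using fun i => term_is_var9 (ts i)
      obtain rfl : ts = fun i => Term.var (Sum.inr (s i)) := funext hs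
      simp only [BoundedFormula.realize_rel, Term.realize_var, Sum.elim_inr]
      have := h _ R s
      change ((fun i => (xs (s i) : ℕ)) ∈ B.rel R) ↔ ((fun i => (ys (s i) : ℕ)) ∈ C.rel R)
      rw [this]
      simp only [hxy]
  | imp _ _ h1 h2 => 
    simp only [BoundedFormula.realize_imp]
    rw [h1, h2]

theorem local_mem9 [L.IsRelational] {K : Set (FinStruc L)} (hK : IsLocalClass K) (B : FinStruc L)
    (h : ∀ m (R : L.Relations m) (t : Fin m → ℕ), t ∈ B.rel R → ∃ C ∈ K, t ∈ C.rel R ∧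
      ∀ n (Q : L.Relations n) (s : Fin n → Fin m),
        ((fun i => t (s i)) ∈ B.rel Q ↔ (fun i => t (s i)) ∈ C.rel Q)) : B ∈ K := by
  obtain ⟨Φ, hΦ, -, rfl⟩ := hK
  intro φ hφ
  obtain ⟨m, hm, R, ψ, hψ, rfl⟩ := hΦ φ hφ
  refine BoundedFormula.realize_alls.2 ?_
  intro xs hR
  have hR : (fun i => (xs i : ℕ)) ∈ B.rel R := hR
  obtain ⟨C, hC, htC, hBC⟩ := h m R _ hR
  have := BoundedFormula.realize_alls.1 (hC _ hφ)
    (fun i => ⟨(xs i : ℕ), C.rel_mem R _ htC i⟩) htC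
  exact (qf_transfer9 ψ hψ B C xs (fun i => ⟨(xs i : ℕ), C.rel_mem R _ htC i⟩)
    (fun _ => rfl) hBC _ _).2 this

theorem inj9 [L.IsRelational] {K : Set (FinStruc L)} (hK : IsLocalClass K) {B : FinStruc L}
    (hB : B ∈ K) {m : ℕ} (R : L.Relations m) (t : Fin m → ℕ) (ht : t ∈ B.rel R) :
    Function.Injective t := by
  obtain ⟨Φ, -, hGI, rfl⟩ := hK
  intro i j hij
  by_contra hne
  have := hB _ (hGI ⟨m, R, i, j, hne, rfl⟩)
  have := BoundedFormula.realize_alls.1 this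
    (fun i => ⟨t i, B.rel_mem R _ ht i⟩) ht
  rw [BoundedFormula.realize_not] at this
  apply this
  simp [hij]

theorem mem_frame9 (B : FinStruc L) (k n : ℕ) (R : L.Relations n) (t : Fin n → ℕ) :
    t ∈ (B.frame k).rel R ↔ n ≤ k ∧ t ∈ B.rel R := by
  by_cases h : n ≤ k <;> simp [FinStruc.frame, h]

theorem frame_mem9 [L.IsRelational] {K : Set (FinStruc L)} (hK : IsLocalClass K) {B : FinStruc L}
    (hB : B ∈ K) (k : ℕ) : B.frame k ∈ K := by
  refine local_mem9 hK _ fun m R t ht => ?_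
  rw [mem_frame9] at ht
  refine ⟨B, hB, ht.2, fun n Q s => ?_⟩
  rw [mem_frame9]
  refine ⟨fun h => h.2, fun h => ⟨?_, h⟩⟩
  have hi : Function.Injective s := (inj9 hK hB Q _ h).of_comp (f := t)
  have := Fintype.card_le_of_injective s hi
  simp at this
  omega

theorem restrict_mem9 [L.IsRelational] {K : Set (FinStruc L)} (hK : IsLocalClass K)
    {B : FinStruc L} (hB : B ∈ K) (X : Finset ℕ) : B.restrict X ∈ K := by
  refine local_mem9 hK _ fun m R t ht => ?_
  exact ⟨B, hB, ht.1, fun n Q s => ⟨fun h => h.1, fun h => ⟨h, fun i => ht.2 _⟩⟩⟩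

/-- Replace the relations of `F` inside the underlying set of `A` by those of `A`. -/
def swap9 (F A : FinStruc L) : FinStruc L where
  carrier := F.carrier ∪ A.carrier
  rel := fun _ R => { t | (t ∈ F.rel R ∧ ¬ ∀ i, t i ∈ A.carrier) ∨ t ∈ A.rel R }
  rel_mem := by
    intro n R t ht i
    rcases ht with ht | ht
    · exact Finset.mem_union_left _ (F.rel_mem R t ht.1 i)
    · exact Finset.mem_union_right _ (A.rel_mem R t ht i)

theorem mem_swap9 (F A : FinStruc L) (n : ℕ) (R : L.Relations n) (t : Fin n → ℕ) :
    t ∈ (swap9 F A).rel R ↔ (t ∈ F.rel R ∧ ¬ ∀ i, t i ∈ A.carrier) ∨ t ∈ A.rel R := Iff.rfl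

theorem mem_restrict9 (F : FinStruc L) (X : Finset ℕ) (n : ℕ) (R : L.Relations n)
    (t : Fin n → ℕ) : t ∈ (F.restrict X).rel R ↔ t ∈ F.rel R ∧ ∀ i, t i ∈ X := Iff.rfl

/-- The set of `k`-frames in `K` extending the `k-1`-frame of `S`. -/
def P9 (K : Set (FinStruc L)) (S : FinStruc L) (k : ℕ) : Set (FinStruc L) :=
  { F | F ∈ K ∧ F.carrier = S.carrier ∧
    (∀ n (R : L.Relations n) t, t ∈ F.rel R → n ≤ k) ∧
    (∀ n (R : L.Relations n) t, n ≤ k - 1 → (t ∈ F.rel R ↔ t ∈ S.rel R)) }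

theorem rel_of_eq9 {A B : FinStruc L} (h : A = B) (n : ℕ) (R : L.Relations n) (t : Fin n → ℕ) :
    t ∈ A.rel R ↔ t ∈ B.rel R := by rw [h]

theorem KsetFr_eq9 [L.IsRelational] {K : Set (FinStruc L)} (hK : IsLocalClass K)
    (S : FinStruc L) (k : ℕ) : KsetFr K S.carrier k S (k - 1) = P9 K S k := by
  ext F
  constructor
  · rintro ⟨B, hB, hc, hf, rfl⟩
    refine ⟨frame_mem9 hK hB k, hc, fun n R t h => ((mem_frame9 _ _ _ _ _).1 h).1, ?_⟩
    intro n R t hn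
    have := rel_of_eq9 hf n R t
    rw [mem_restrict9, mem_frame9, mem_frame9] at this
    rw [mem_frame9]
    constructor
    · intro h
      exact (this.1 ⟨⟨hn, h.2⟩, fun i => hc ▸ B.rel_mem R t h.2 i⟩).2
    · intro h
      exact ⟨by omega, (this.2 ⟨hn, h⟩).1.2⟩
  · rintro ⟨hF, hc, h1, h2⟩
    refine ⟨F, hF, hc, ?_, ?_⟩
    · refine FinStruc.ext9 ?_ fun n R t => ?_
      · simp [FinStruc.restrict, FinStruc.frame, hc]
      · rw [mem_restrict9, mem_frame9, mem_frame9]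
        constructor
        · rintro ⟨⟨hn, h⟩, -⟩
          exact ⟨hn, (h2 n R t hn).1 h⟩
        · rintro ⟨hn, h⟩
          exact ⟨⟨hn, (h2 n R t hn).2 h⟩, S.rel_mem R t h⟩
    · refine FinStruc.ext9 rfl fun n R t => ?_
      rw [mem_frame9]
      exact ⟨fun h => ⟨h1 n R t h, h⟩, fun h => h.2⟩

theorem inter_eq9 [L.IsRelational] {K : Set (FinStruc L)}
    (S A : FinStruc L) (k : ℕ) :
    P9 K S k ∩ KsetFr K S.carrier k A k = {F ∈ P9 K S k | F.restrict A.carrier = A.frame k} := by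
  ext F
  constructor
  · rintro ⟨hP, B, hB, hc, hf, rfl⟩
    exact ⟨hP, hf⟩
  · rintro ⟨hP, hf⟩
    have hFF : F = F.frame k := by
      refine FinStruc.ext9 rfl fun n R t => ?_
      rw [mem_frame9]
      exact ⟨fun h => ⟨hP.2.2.1 n R t h, h⟩, fun h => h.2⟩
    exact ⟨hP, F, hP.1, hP.2.1, by rw [← hFF]; exact hf, hFF⟩

theorem restrict_P9 [L.IsRelational] {K : Set (FinStruc L)} (hK : IsLocalClass K)
    {S A : FinStruc L} (hsub : A.IsInducedSub S) {k : ℕ} {F : FinStruc L} (hF : F ∈ P9 K S k) :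
    F.restrict A.carrier ∈ P9 K A k := by
  obtain ⟨hF, hc, h1, h2⟩ := hF
  refine ⟨restrict_mem9 hK hF _, ?_, fun n R t h => h1 n R t h.1, fun n R t hn => ?_⟩
  · simp only [FinStruc.restrict, hc]
    exact Finset.inter_eq_right.2 hsub.1
  · rw [mem_restrict9, h2 n R t hn]
    constructor
    · rintro ⟨h, h'⟩
      exact (hsub.2 R t h').2 h
    · intro h
      exact ⟨(hsub.2 R t (A.rel_mem R t h)).1 h, A.rel_mem R t h⟩

theorem swap_P9 [L.IsRelational] {K : Set (FinStruc L)} (hK : IsLocalClass K)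
    {S A : FinStruc L} (hsub : A.IsInducedSub S) {k : ℕ} (hk1 : 1 ≤ k)
    {F A' : FinStruc L} (hF : F ∈ P9 K S k)
    (hA' : A' ∈ P9 K A k) : swap9 F A' ∈ P9 K S k := by
  obtain ⟨hF, hc, h1, h2⟩ := hF
  obtain ⟨hA, hcA, h1A, h2A⟩ := hA'
  have hlow : ∀ n (R : L.Relations n) t, n ≤ k - 1 →
      (t ∈ (swap9 F A').rel R ↔ t ∈ S.rel R) := by
    intro n R t hn
    rw [mem_swap9, h2 n R t hn, h2A n R t hn, hcA]
    constructor
    · rintro (h | h)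
      · exact h.1
      · exact (hsub.2 R t (A.rel_mem R t h)).1 h
    · intro h
      by_cases h' : ∀ i, t i ∈ A.carrier
      · exact Or.inr ((hsub.2 R t h').2 h)
      · exact Or.inl ⟨h, h'⟩
  have hle : ∀ n (R : L.Relations n) t, t ∈ (swap9 F A').rel R → n ≤ k := by
    rintro n R t (h | h)
    · exact h1 n R t h.1
    · exact h1A n R t h
  have hinj : ∀ n (R : L.Relations n) t, t ∈ (swap9 F A').rel R → Function.Injective t := by
    rintro n R t (h | h)
    · exact inj9 hK hF R t h.1
    · exact inj9 hK hA R t h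
  refine ⟨local_mem9 hK _ fun m R t ht => ?_, ?_, hle, hlow⟩
  · by_cases htA : ∀ i, t i ∈ A'.carrier
    · refine ⟨A', hA, ?_, fun n Q s => ?_⟩
      · rcases ht with ht | ht
        · exact absurd htA ht.2
        · exact ht
      · rw [mem_swap9]
        constructor
        · rintro (h | h)
          · exact absurd (fun i => htA (s i)) h.2
          · exact h
        · exact Or.inr
    · refine ⟨F, hF, ?_, fun n Q s => ?_⟩
      · rcases ht with ht | ht
        · exact ht.1
        · exact absurd (A'.rel_mem R t ht) htA
      · by_cases hn : n ≤ k - 1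
        · rw [hlow n Q _ hn, h2 n Q _ hn]
        · by_cases hi : Function.Injective fun i => t (s i)
          · have hs : Function.Injective s := hi.of_comp (f := t)
            have hnm := Fintype.card_le_of_injective s hs
            simp only [Fintype.card_fin] at hnm
            have hm := hle m R t ht
            obtain rfl : n = m := by omega
            have hsurj := Finite.surjective_of_injective hs
            have hnot : ¬ ∀ i, t (s i) ∈ A'.carrier := by
              intro h
              apply htA
              intro i
              obtain ⟨j, rfl⟩ := hsurj i
              exact h j
            rw [mem_swap9]
            constructor
            · rintro (h | h)
              · exact h.1
              · exact absurd (A'.rel_mem Q _ h) hnot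
            · exact fun h => Or.inl ⟨h, hnot⟩
          · exact ⟨fun h => absurd (hinj n Q _ h) hi, fun h => absurd (inj9 hK hF Q _ h) hi⟩
  · simp only [swap9, hc, hcA]
    exact Finset.union_eq_left.2 hsub.1

theorem swap_restrict9 {F A : FinStruc L} {X : Finset ℕ} (hX : A.carrier = X) :
    (swap9 F A).restrict X = A := by
  subst hX
  refine FinStruc.ext9 ?_ fun n R t => ?_
  · simp [FinStruc.restrict, swap9]
  · rw [mem_restrict9, mem_swap9]
    constructor
    · rintro ⟨h | h, h'⟩
      · exact absurd h' h.2
      · exact h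
    · exact fun h => ⟨Or.inr h, A.rel_mem R t h⟩

theorem swap_swap9 {F A B : FinStruc L} (hAB : A.carrier = B.carrier) (X : Finset ℕ)
    (hX : A.carrier = X) (hXF : X ⊆ F.carrier)
    (hB : F.restrict X = B) : swap9 (swap9 F A) B = F := by
  subst hB
  refine FinStruc.ext9 ?_ fun n R t => ?_
  · simp only [swap9, ← hAB, hX]
    simp [Finset.union_eq_left.2 hXF]
  · rw [mem_swap9, mem_swap9, mem_restrict9, ← hAB, hX]
    constructor
    · rintro (⟨h | h, h'⟩ | h)
      · exact h.1
      · exact absurd (hX ▸ A.rel_mem R t h) h'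
      · exact h.1
    · intro h
      by_cases h' : ∀ i, t i ∈ X
      · exact Or.inr ⟨h, h'⟩
      · exact Or.inl ⟨Or.inl ⟨h, h'⟩, h'⟩

/-- Lemma on uniformity of frame counts: for `S ∈ K`, `A` an induced substructure of `S` and
`1 ≤ k ≤ |A|`, all members of `K^{|A|,k}_{A,k-1}` determine intersections of the same size, and
`‖K^{|S|,k}_{S,k-1}‖ = N(A,k-1) · ‖K^{|S|,k}_{S,k-1} ∩ K^{|S|,k}_{A,k}‖`. -/
theorem statement_9 (L : FirstOrder.Language.{u, v}) [L.IsRelational]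
    [∀ n, Finite (L.Relations n)] (K : Set (FinStruc L)) (hK : IsLocalClass K)
    (S A : FinStruc L) (hS : S ∈ K) (hsub : A.IsInducedSub S)
    (k : ℕ) (hk1 : 1 ≤ k) (hk2 : k ≤ A.carrier.card) :
    (∀ A' ∈ KsetFr K A.carrier k A (k - 1),
        (KsetFr K S.carrier k S (k - 1) ∩ KsetFr K S.carrier k A' k).ncard =
          (KsetFr K S.carrier k S (k - 1) ∩ KsetFr K S.carrier k A k).ncard) ∧
      (KsetFr K S.carrier k S (k - 1)).ncard =
        (KsetFr K A.carrier k A (k - 1)).ncard *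
          (KsetFr K S.carrier k S (k - 1) ∩ KsetFr K S.carrier k A k).ncard := by
  have hAK : A ∈ K := by
    refine local_mem9 hK _ fun m R t ht => ?_
    have hm := A.rel_mem R t ht
    exact ⟨S, hS, (hsub.2 R t hm).1 ht, fun n Q s => hsub.2 Q _ fun i => hm (s i)⟩
  have hA0 : A.frame k ∈ P9 K A k := by
    refine ⟨frame_mem9 hK hAK k, rfl, fun n R t h => ((mem_frame9 _ _ _ _ _).1 h).1, ?_⟩
    intro n R t hn
    rw [mem_frame9]
    exact ⟨fun h => h.2, fun h => ⟨by omega, h⟩⟩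
  rw [KsetFr_eq9 hK, KsetFr_eq9 hK, inter_eq9]
  have hcar : ∀ F ∈ P9 K S k, A.carrier ⊆ F.carrier := fun F hF => hF.2.1 ▸ hsub.1
  have key : ∀ A₁ ∈ P9 K A k, ∀ A₂ ∈ P9 K A k, ∀ F ∈ P9 K S k, F.restrict A.carrier = A₂ →
      swap9 (swap9 F A₁) A₂ = F := by
    intro A₁ h₁ A₂ h₂ F hF hr
    exact swap_swap9 (h₁.2.1.trans h₂.2.1.symm) A.carrier h₁.2.1 (hcar F hF) hr
  have hfib : ∀ A₁ ∈ P9 K A k, ∀ F ∈ P9 K S k,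
      swap9 F A₁ ∈ {F ∈ P9 K S k | F.restrict A.carrier = A₁} := fun A₁ h₁ F hF =>
    ⟨swap_P9 hK hsub hk1 hF h₁, swap_restrict9 h₁.2.1⟩
  refine ⟨?_, ?_⟩
  · intro A' hA'
    rw [inter_eq9]
    have hfr : A'.frame k = A' := by
      refine FinStruc.ext9 rfl fun n R t => ?_
      rw [mem_frame9]
      exact ⟨fun h => h.2, fun h => ⟨hA'.2.2.1 n R t h, h⟩⟩
    rw [hfr, hA'.2.1]
    refine Nat.card_congr ⟨fun F => ⟨swap9 F.1 (A.frame k), hfib _ hA0 _ F.2.1⟩,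
      fun F => ⟨swap9 F.1 A', hfib _ hA' _ F.2.1⟩, ?_, ?_⟩
    · rintro ⟨F, hF⟩
      exact Subtype.ext (key _ hA0 _ hA' F hF.1 hF.2)
    · rintro ⟨F, hF⟩
      exact Subtype.ext (key _ hA' _ hA0 F hF.1 hF.2)
  · rw [← Set.ncard_prod]
    refine Nat.card_congr ⟨fun F => ⟨(F.1.restrict A.carrier, swap9 F.1 (A.frame k)),
        restrict_P9 hK hsub F.2, hfib _ hA0 _ F.2⟩,
      fun G => ⟨swap9 G.1.2 G.1.1, (hfib _ G.2.1 _ G.2.2.1).1⟩, ?_, ?_⟩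
    · rintro ⟨F, hF⟩
      exact Subtype.ext (key _ hA0 _ (restrict_P9 hK hsub hF) F hF rfl)
    · rintro ⟨⟨A', F⟩, hA', hF⟩
      exact Subtype.ext (Prod.ext (swap_restrict9 hA'.2.1) (key _ hA' _ hA0 F hF.1 hF.2))
end

section
/- Let K be a local class of finite Σ-structures. For any B ∈ K and any k < |B|, N(B,k) = ∏_{X ⊆ |B|, |X| = k+1} N(B↾X, k), where B↾X denotes the induced substructure of B on X. -/
open FirstOrder FirstOrder.Language

universe u v

variable {L : FirstOrder.Language.{u, v}}

theorem FinStruc.ext' {A C : FinStruc L} (h : A.carrier = C.carrier)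
    (h2 : ∀ (n : ℕ) (R : L.Relations n), A.rel R = C.rel R) : A = C := by
  obtain ⟨a, r, p⟩ := A
  obtain ⟨c, q, s⟩ := C
  have h1 : a = c := h
  have h3 : r = q := by
    funext n R
    exact h2 n R
  subst h1 h3
  rfl

theorem term_realize_transfer [L.IsRelational] (A C : FinStruc L) {m : ℕ}
    (a : Fin m → {x : ℕ // x ∈ A.carrier}) (c : Fin m → {x : ℕ // x ∈ C.carrier})
    (τ : L.Term (Empty ⊕ Fin m)) :
    ∃ i, τ.realize (Sum.elim default a) = a i ∧ τ.realize (Sum.elim default c) = c i := by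
  cases τ with
  | var x =>
    rcases x with x | i
    · exact x.elim
    · exact ⟨i, rfl, rfl⟩
  | func f ts => exact isEmptyElim f

theorem qf_transfer [L.IsRelational] (A C : FinStruc L) {m : ℕ}
    (a : Fin m → {x : ℕ // x ∈ A.carrier}) (c : Fin m → {x : ℕ // x ∈ C.carrier})
    (hac : ∀ i, (a i : ℕ) = c i)
    (h : ∀ (n : ℕ) (R : L.Relations n) (s : Fin n → Fin m),
      (fun i => (a (s i) : ℕ)) ∈ A.rel R ↔ (fun i => (a (s i) : ℕ)) ∈ C.rel R)
    (ψ : L.BoundedFormula Empty m) (hψ : ψ.IsQF) :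
    ψ.Realize default a ↔ ψ.Realize default c := by
  induction hψ with
  | falsum => exact Iff.rfl
  | of_isAtomic hat =>
    cases hat with
    | equal t₁ t₂ =>
      obtain ⟨i, hi, hi'⟩ := term_realize_transfer A C a c t₁
      obtain ⟨j, hj, hj'⟩ := term_realize_transfer A C a c t₂
      rw [BoundedFormula.realize_bdEqual, BoundedFormula.realize_bdEqual, hi, hi', hj, hj',
        Subtype.ext_iff, Subtype.ext_iff, hac, hac]
    | rel R ts =>
      choose s hs hs' using fun i => term_realize_transfer A C a c (ts i)
      rw [BoundedFormula.realize_rel, BoundedFormula.realize_rel]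
      simp only [hs, hs']
      change (fun i => (a (s i) : ℕ)) ∈ A.rel R ↔ (fun i => (c (s i) : ℕ)) ∈ C.rel R
      rw [h]
      simp only [hac]
  | imp _ _ ih1 ih2 =>
    rw [BoundedFormula.realize_imp, BoundedFormula.realize_imp, ih1, ih2]

theorem sat_local [L.IsRelational] (A : FinStruc L) {m : ℕ} (R : L.Relations m)
    (ψ : L.BoundedFormula Empty m) :
    A.Sat (BoundedFormula.alls
      ((Relations.boundedFormula R fun k => Term.var (Sum.inr k)).imp ψ)) ↔
    ∀ a : Fin m → {x : ℕ // x ∈ A.carrier}, (fun i => (a i : ℕ)) ∈ A.rel R →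
      ψ.Realize default a := by
  unfold FinStruc.Sat Sentence.Realize
  rw [BoundedFormula.realize_alls]
  rfl

theorem inj_of_mem [L.IsRelational] {K : Set (FinStruc L)} (hK : IsLocalClass K)
    {A : FinStruc L} (hA : A ∈ K) {n : ℕ} (R : L.Relations n) (t : Fin n → ℕ)
    (ht : t ∈ A.rel R) : Function.Injective t := by
  obtain ⟨Φ, hl, hg, rfl⟩ := hK
  intro i j hij
  by_contra hne
  have h := hA _ (hg ⟨n, R, i, j, hne, rfl⟩)
  unfold giSentence at h
  rw [sat_local] at h
  have h2 := h (fun i => ⟨t i, A.rel_mem R t ht i⟩) ht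
  rw [BoundedFormula.realize_not] at h2
  exact h2 (Subtype.ext hij)

theorem mem_of_local [L.IsRelational] {K : Set (FinStruc L)} (hK : IsLocalClass K)
    (C : FinStruc L)
    (hinj : ∀ (n : ℕ) (R : L.Relations n) (t : Fin n → ℕ), t ∈ C.rel R → Function.Injective t)
    (h : ∀ (m : ℕ) (R : L.Relations m) (t : Fin m → ℕ), t ∈ C.rel R →
      ∃ A ∈ K, t ∈ A.rel R ∧ ∀ (n : ℕ) (S : L.Relations n) (s : Fin n → Fin m), n ≤ m →
        ((fun i => t (s i)) ∈ A.rel S ↔ (fun i => t (s i)) ∈ C.rel S)) : C ∈ K := by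
  have hK' := hK
  obtain ⟨Φ, hl, hg, hKe⟩ := hK
  rw [hKe]
  intro φ hφ
  obtain ⟨m, hm, R, ψ, hψ, rfl⟩ := hl φ hφ
  rw [sat_local]
  intro c hc
  obtain ⟨A, hA, htA, hag⟩ := h m R _ hc
  have hsat : A.Sat _ := (hKe ▸ hA : A ∈ {A : FinStruc L | ∀ φ ∈ Φ, A.Sat φ}) _ hφ
  rw [sat_local] at hsat
  refine (qf_transfer A C (fun i => ⟨c i, A.rel_mem R _ htA i⟩) c (fun _ => rfl) ?_ ψ hψ).1
    (hsat _ htA)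
  intro n S s
  by_cases hn : n ≤ m
  · exact hag n S s hn
  · have hs : ¬ Function.Injective (fun i => (c (s i) : ℕ)) := by
      intro hi
      have : Function.Injective s := fun i j hij => hi (by simp [hij])
      have := Fintype.card_le_of_injective s this
      simp at this
      omega
    exact ⟨fun h1 => absurd (inj_of_mem hK' hA S _ h1) hs, fun h1 => absurd (hinj n S _ h1) hs⟩

theorem restrict_mem [L.IsRelational] {K : Set (FinStruc L)} (hK : IsLocalClass K)
    {A : FinStruc L} (hA : A ∈ K) (X : Finset ℕ) : A.restrict X ∈ K := by
  refine mem_of_local hK _ (fun n R t ht => inj_of_mem hK hA R t ht.1) ?_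
  intro m R t ht
  exact ⟨A, hA, ht.1, fun n S s _ => ⟨fun h => ⟨h, fun i => ht.2 _⟩, fun h => h.1⟩⟩

theorem frame_rel_le (A : FinStruc L) {l n : ℕ} (h : n ≤ l) (R : L.Relations n) :
    (A.frame l).rel R = A.rel R := if_pos h

theorem frame_rel_gt (A : FinStruc L) {l n : ℕ} (h : ¬ n ≤ l) (R : L.Relations n) :
    (A.frame l).rel R = ∅ := if_neg h

theorem frame_mem [L.IsRelational] {K : Set (FinStruc L)} (hK : IsLocalClass K)
    {A : FinStruc L} (hA : A ∈ K) (l : ℕ) : A.frame l ∈ K := by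
  have hsub : ∀ (n : ℕ) (R : L.Relations n) (t : Fin n → ℕ), t ∈ (A.frame l).rel R →
      n ≤ l ∧ t ∈ A.rel R := by
    intro n R t ht
    by_cases h : n ≤ l
    · rw [frame_rel_le A h] at ht
      exact ⟨h, ht⟩
    · rw [frame_rel_gt A h] at ht
      exact ht.elim
  refine mem_of_local hK _ (fun n R t ht => inj_of_mem hK hA R t (hsub n R t ht).2) ?_
  intro m R t ht
  obtain ⟨hm, ht'⟩ := hsub m R t ht
  refine ⟨A, hA, ht', fun n S s hn => ?_⟩
  rw [frame_rel_le A (hn.trans hm)]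

theorem mem_Kset_iff [L.IsRelational] {K : Set (FinStruc L)} (hK : IsLocalClass K)
    (S F : FinStruc L) (k : ℕ) :
    F ∈ KsetFr K S.carrier (k + 1) S k ↔ F ∈ K ∧ F.carrier = S.carrier ∧
      (∀ (n : ℕ) (R : L.Relations n), n ≤ k → F.rel R = S.rel R) ∧
      (∀ (n : ℕ) (R : L.Relations n), ¬ n ≤ k + 1 → F.rel R = ∅) := by
  constructor
  · rintro ⟨T, hT, hc, hf, rfl⟩
    refine ⟨frame_mem hK hT _, hc, ?_, fun n R h => frame_rel_gt T h R⟩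
    intro n R hn
    have h1 : ((T.frame k).restrict S.carrier).rel R = (S.frame k).rel R := by rw [hf]
    rw [frame_rel_le S hn] at h1
    rw [frame_rel_le T (by omega), ← h1]
    ext t
    change _ ↔ t ∈ (T.frame k).rel R ∧ ∀ i, t i ∈ S.carrier
    rw [frame_rel_le T hn]
    exact ⟨fun h => ⟨h, fun i => hc ▸ T.rel_mem R t h i⟩, fun h => h.1⟩
  · rintro ⟨hF, hc, h1, h2⟩
    refine ⟨F, hF, hc, ?_, ?_⟩
    · refine FinStruc.ext' ?_ ?_
      · change F.carrier ∩ S.carrier = S.carrier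
        rw [hc, Finset.inter_self]
      · intro n R
        ext t
        change t ∈ (F.frame k).rel R ∧ (∀ i, t i ∈ S.carrier) ↔ _
        by_cases hn : n ≤ k
        · rw [frame_rel_le F hn, frame_rel_le S hn, h1 n R hn]
          exact ⟨fun h => h.1, fun h => ⟨h, S.rel_mem R t h⟩⟩
        · rw [frame_rel_gt F hn, frame_rel_gt S hn]
          simp
    · refine FinStruc.ext' rfl ?_
      intro n R
      by_cases hn : n ≤ k + 1
      · rw [frame_rel_le F hn]
      · rw [frame_rel_gt F hn, h2 n R hn]

/-- Glue a family of structures on the `(k+1)`-subsets over the `k`-frame of `B`. -/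
def glue (B : FinStruc L) (k : ℕ)
    (G : {X // X ∈ Finset.powersetCard (k + 1) B.carrier} → FinStruc L)
    (hG : ∀ X, (G X).carrier = X.1) : FinStruc L where
  carrier := B.carrier
  rel := fun n R => {t | (n ≤ k ∧ t ∈ B.rel R) ∨ (n = k + 1 ∧ ∃ X, t ∈ (G X).rel R)}
  rel_mem := by
    rintro n R t (⟨_, h⟩ | ⟨_, X, h⟩) i
    · exact B.rel_mem R t h i
    · have := (G X).rel_mem R t h i
      rw [hG] at this
      exact (Finset.mem_powersetCard.1 X.2).1 this

theorem eq_of_tuple {k : ℕ} {X Y : Finset ℕ} (hX : X.card = k + 1) (hY : Y.card = k + 1)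
    (t : Fin (k + 1) → ℕ) (ht : Function.Injective t) (h1 : ∀ i, t i ∈ X) (h2 : ∀ i, t i ∈ Y) :
    X = Y := by
  have hc : (Finset.univ.image t).card = k + 1 := by
    rw [Finset.card_image_of_injective _ ht]; simp
  have e1 : Finset.univ.image t = X := Finset.eq_of_subset_of_card_le
    (by intro x hx; simp at hx; obtain ⟨i, rfl⟩ := hx; exact h1 i) (by omega)
  have e2 : Finset.univ.image t = Y := Finset.eq_of_subset_of_card_le
    (by intro x hx; simp at hx; obtain ⟨i, rfl⟩ := hx; exact h2 i) (by omega)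
  rw [← e1, e2]

theorem restrict_glue [L.IsRelational] {K : Set (FinStruc L)} (hK : IsLocalClass K)
    (B : FinStruc L) (k : ℕ)
    (G : {X // X ∈ Finset.powersetCard (k + 1) B.carrier} → FinStruc L)
    (hG : ∀ X, (G X).carrier = X.1) (hGK : ∀ X, G X ∈ K)
    (hlow : ∀ X (n : ℕ) (R : L.Relations n), n ≤ k → (G X).rel R = (B.restrict X.1).rel R)
    (hhigh : ∀ X (n : ℕ) (R : L.Relations n), ¬ n ≤ k + 1 → (G X).rel R = ∅)
    (X : {X // X ∈ Finset.powersetCard (k + 1) B.carrier}) :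
    (glue B k G hG).restrict X.1 = G X := by
  refine FinStruc.ext' ?_ ?_
  · rw [hG]
    exact Finset.inter_eq_right.2 (Finset.mem_powersetCard.1 X.2).1
  · intro n R
    ext t
    change (((n ≤ k ∧ t ∈ B.rel R) ∨ (n = k + 1 ∧ ∃ X, t ∈ (G X).rel R)) ∧
      ∀ i, t i ∈ X.1) ↔ _
    by_cases hn : n ≤ k
    · rw [hlow X n R hn]
      change _ ↔ t ∈ B.rel R ∧ ∀ i, t i ∈ X.1
      have : n ≠ k + 1 := by omega
      simp [hn, this]
    · by_cases hn' : n = k + 1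
      · subst hn'
        constructor
        · rintro ⟨h | ⟨_, Y, hY⟩, hX⟩
          · exact absurd h.1 hn
          · have : Y = X := Subtype.ext (eq_of_tuple (Finset.mem_powersetCard.1 Y.2).2
              (Finset.mem_powersetCard.1 X.2).2 t (inj_of_mem hK (hGK Y) R t hY)
              (fun i => hG Y ▸ (G Y).rel_mem R t hY i) hX)
            exact this ▸ hY
        · intro h
          exact ⟨Or.inr ⟨rfl, X, h⟩, fun i => hG X ▸ (G X).rel_mem R t h i⟩
      · rw [hhigh X n R (by omega)]
        simp [hn, hn']

theorem glue_mem [L.IsRelational] {K : Set (FinStruc L)} (hK : IsLocalClass K)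
    (B : FinStruc L) (hB : B ∈ K) (k : ℕ)
    (G : {X // X ∈ Finset.powersetCard (k + 1) B.carrier} → FinStruc L)
    (hG : ∀ X, (G X).carrier = X.1) (hGK : ∀ X, G X ∈ K)
    (hlow : ∀ X (n : ℕ) (R : L.Relations n), n ≤ k → (G X).rel R = (B.restrict X.1).rel R)
    (hhigh : ∀ X (n : ℕ) (R : L.Relations n), ¬ n ≤ k + 1 → (G X).rel R = ∅) :
    glue B k G hG ∈ K := by
  refine mem_of_local hK _ ?_ ?_
  · rintro n R t (⟨_, h⟩ | ⟨_, X, h⟩)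
    · exact inj_of_mem hK hB R t h
    · exact inj_of_mem hK (hGK X) R t h
  · rintro m R t (⟨hm, h⟩ | ⟨hm, X, h⟩)
    · refine ⟨B, hB, h, fun n S s hn => ?_⟩
      refine ⟨fun h => Or.inl ⟨hn.trans hm, h⟩, ?_⟩
      rintro (h | h)
      · exact h.2
      · omega
    · refine ⟨G X, hGK X, h, fun n S s hn => ?_⟩
      have hX : ∀ i, t i ∈ X.1 := fun i => hG X ▸ (G X).rel_mem R t h i
      have e : (G X).rel S = ((glue B k G hG).restrict X.1).rel S := by
        rw [restrict_glue hK B k G hG hGK hlow hhigh X]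
      rw [e]
      exact ⟨fun h => h.1, fun h => ⟨h, fun i => hX _⟩⟩

/-- Independence of frame counts: `N(B,k)` is the product over the `(k+1)`-element subsets `X`
of the underlying set of `B` of `N(B↾X, k)`. -/
theorem statement_10 (L : FirstOrder.Language.{u, v}) [L.IsRelational]
    [∀ n, Finite (L.Relations n)] (K : Set (FinStruc L)) (hK : IsLocalClass K)
    (B : FinStruc L) (hB : B ∈ K) (k : ℕ) (hk : k < B.carrier.card) :
    Ncount K B k =
      ∏ X ∈ Finset.powersetCard (k + 1) B.carrier, Ncount K (B.restrict X) k := by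
  have hcar : ∀ X : {X // X ∈ Finset.powersetCard (k + 1) B.carrier},
      (B.restrict X.1).carrier = X.1 := fun X =>
    Finset.inter_eq_right.2 (Finset.mem_powersetCard.1 X.2).1
  rw [← Finset.prod_coe_sort]
  unfold Ncount
  simp only [← Nat.card_coe_set_eq]
  rw [← Nat.card_pi]
  have hmap : ∀ (F : KsetFr K B.carrier (k + 1) B k)
      (X : {X // X ∈ Finset.powersetCard (k + 1) B.carrier}),
      F.1.restrict X.1 ∈ KsetFr K (B.restrict X.1).carrier (k + 1) (B.restrict X.1) k := by
    intro F X
    obtain ⟨hF, hc, h1, h2⟩ := (mem_Kset_iff hK B F.1 k).1 F.2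
    refine (mem_Kset_iff hK _ _ k).2 ⟨restrict_mem hK hF _, ?_, ?_, ?_⟩
    · change F.1.carrier ∩ _ = B.carrier ∩ _
      rw [hc]
    · intro n R hn
      change {t | t ∈ F.1.rel R ∧ ∀ i, t i ∈ X.1} = {t | t ∈ B.rel R ∧ ∀ i, t i ∈ X.1}
      rw [h1 n R hn]
    · intro n R hn
      change {t | t ∈ F.1.rel R ∧ ∀ i, t i ∈ X.1} = ∅
      rw [h2 n R hn]
      simp
  refine Nat.card_eq_of_bijective
    (fun F (X : {X // X ∈ Finset.powersetCard (k + 1) B.carrier}) =>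
      (⟨F.1.restrict X.1, hmap F X⟩ :
        KsetFr K (B.restrict X.1).carrier (k + 1) (B.restrict X.1) k)) ⟨?_, ?_⟩
  · intro F F' hFF
    obtain ⟨hF, hc, h1, h2⟩ := (mem_Kset_iff hK B F.1 k).1 F.2
    obtain ⟨hF', hc', h1', h2'⟩ := (mem_Kset_iff hK B F'.1 k).1 F'.2
    have hres : ∀ X : {X // X ∈ Finset.powersetCard (k + 1) B.carrier},
        F.1.restrict X.1 = F'.1.restrict X.1 := fun X => congrArg Subtype.val (congrFun hFF X)
    have key : ∀ A A' : FinStruc L, A ∈ K → A.carrier = B.carrier →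
        (∀ X : {X // X ∈ Finset.powersetCard (k + 1) B.carrier},
          A.restrict X.1 = A'.restrict X.1) →
        ∀ (R : L.Relations (k + 1)) t, t ∈ A.rel R → t ∈ A'.rel R := by
      intro A A' hA hAc hAA R t ht
      have hi := inj_of_mem hK hA R t ht
      have hX : Finset.univ.image t ∈ Finset.powersetCard (k + 1) B.carrier := by
        rw [Finset.mem_powersetCard, Finset.card_image_of_injective _ hi]
        refine ⟨?_, by simp⟩
        intro x hx
        simp at hx
        obtain ⟨i, rfl⟩ := hx
        exact hAc ▸ A.rel_mem R t ht i
      have h3 : t ∈ (A.restrict (Finset.univ.image t)).rel R := ⟨ht, fun i => by simp⟩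
      rw [hAA ⟨_, hX⟩] at h3
      exact h3.1
    refine Subtype.ext (FinStruc.ext' (hc.trans hc'.symm) ?_)
    intro n R
    by_cases hn : n ≤ k
    · rw [h1 n R hn, h1' n R hn]
    · by_cases hn' : n = k + 1
      · subst hn'
        ext t
        exact ⟨key _ _ hF hc hres R t, key _ _ hF' hc' (fun X => (hres X).symm) R t⟩
      · rw [h2 n R (by omega), h2' n R (by omega)]
  · intro G
    have hG := fun X => (mem_Kset_iff hK _ _ k).1 (G X).2
    have hGc : ∀ X, (G X).1.carrier = X.1 := fun X => (hG X).2.1.trans (hcar X)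
    refine ⟨⟨glue B k (fun X => (G X).1) hGc, (mem_Kset_iff hK _ _ k).2 ⟨?_, rfl, ?_, ?_⟩⟩, ?_⟩
    · exact glue_mem hK B hB k _ hGc (fun X => (hG X).1) (fun X => (hG X).2.2.1)
        (fun X => (hG X).2.2.2)
    · intro n R hn
      ext t
      change ((n ≤ k ∧ t ∈ B.rel R) ∨ (n = k + 1 ∧ ∃ X, t ∈ (G X).1.rel R)) ↔ _
      have : n ≠ k + 1 := by omega
      simp [hn, this]
    · intro n R hn
      ext t
      change ((n ≤ k ∧ t ∈ B.rel R) ∨ (n = k + 1 ∧ ∃ X, t ∈ (G X).1.rel R)) ↔ _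
      have h1 : n ≠ k + 1 := by omega
      have h2 : ¬ n ≤ k := by omega
      simp [h1, h2]
    · funext X
      exact Subtype.ext (restrict_glue hK B k _ hGc (fun X => (hG X).1)
        (fun X => (hG X).2.2.1) (fun X => (hG X).2.2.2) X)
end

section
/- 0-1 law for local classes: let K be a local class of finite Σ-structures with Fraïssé limit R, and for N ∈ ℕ let μ_N be the frame-wise uniform measure on K^N. For every first-order sentence φ over Σ, μ_N({S ∈ K^N : S ⊨ φ}) converges as N → ∞, with limit 1 if φ holds in R and limit 0 otherwise. -/
open FirstOrder FirstOrder.Language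

universe u v

variable {L : FirstOrder.Language.{u, v}}

/-- `K^N`: the members of `K` with underlying set `{0, …, N-1}`. -/
def KNset (K : Set (FinStruc L)) (N : ℕ) : Set (FinStruc L) :=
  { S | S ∈ K ∧ S.carrier = Finset.range N }

/-- The basic event `O_N(A,k)`: members of `K^N` whose induced substructure on the underlying
set of `A` has `k`-frame equal to the `k`-frame of `A`. -/
def ONset (K : Set (FinStruc L)) (N : ℕ) (A : FinStruc L) (k : ℕ) : Set (FinStruc L) :=
  { S | S ∈ KNset K N ∧ (S.frame k).restrict A.carrier = A.frame k }

set_option linter.unusedVariables false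

/-! ### Model-theoretic preliminaries -/

namespace ZeroOne

/-- Two tuples have the same quantifier-free type. -/
def TEquiv {M N : Type*} [L.Structure M] [L.Structure N] {m : ℕ} (a : Fin m → M) (b : Fin m → N) :
    Prop :=
  (∀ i j, a i = a j ↔ b i = b j) ∧
    ∀ (k : ℕ) (R : L.Relations k) (f : Fin k → Fin m),
      Structure.RelMap R (fun i => a (f i)) ↔ Structure.RelMap R (fun i => b (f i))

theorem term_var [L.IsRelational] {m : ℕ} (t : L.Term (Empty ⊕ Fin m)) :
    ∃ i : Fin m, t = Term.var (Sum.inr i) := by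
  cases t with
  | var x =>
    rcases x with x | i
    · exact x.elim
    · exact ⟨i, rfl⟩
  | func f _ => exact isEmptyElim f

theorem TEquiv.equal [L.IsRelational] {M N : Type*} [L.Structure M] [L.Structure N] {m : ℕ}
    {a : Fin m → M} {b : Fin m → N} (h : TEquiv (L := L) a b) (v : Empty → M) (w : Empty → N)
    (t₁ t₂ : L.Term (Empty ⊕ Fin m)) :
    (t₁.realize (Sum.elim v a) = t₂.realize (Sum.elim v a)) ↔
      (t₁.realize (Sum.elim w b) = t₂.realize (Sum.elim w b)) := by
  obtain ⟨i, rfl⟩ := term_var t₁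
  obtain ⟨j, rfl⟩ := term_var t₂
  simpa using h.1 i j

theorem TEquiv.rel [L.IsRelational] {M N : Type*} [L.Structure M] [L.Structure N] {m : ℕ}
    {a : Fin m → M} {b : Fin m → N} (h : TEquiv (L := L) a b) (v : Empty → M) (w : Empty → N)
    {k : ℕ} (R : L.Relations k) (ts : Fin k → L.Term (Empty ⊕ Fin m)) :
    Structure.RelMap R (fun i => (ts i).realize (Sum.elim v a)) ↔
      Structure.RelMap R (fun i => (ts i).realize (Sum.elim w b)) := by
  choose f hf using fun i => term_var (ts i)
  simpa [hf] using h.2 k R f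

theorem TEquiv.qf [L.IsRelational] {M N : Type*} [L.Structure M] [L.Structure N] {m : ℕ}
    {a : Fin m → M} {b : Fin m → N} (h : TEquiv (L := L) a b) (v : Empty → M) (w : Empty → N)
    {ψ : L.BoundedFormula Empty m} (hψ : ψ.IsQF) : ψ.Realize v a ↔ ψ.Realize w b := by
  induction hψ with
  | falsum => exact Iff.rfl
  | of_isAtomic hA =>
    cases hA with
    | equal t₁ t₂ => exact h.equal v w t₁ t₂
    | rel R ts => exact h.rel v w R ts
  | imp _ _ ih₁ ih₂ => simp only [BoundedFormula.realize_imp, ih₁, ih₂]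

/-- A bound for the number of variables used in a formula. -/
def bd : ∀ {n : ℕ}, L.BoundedFormula Empty n → ℕ
  | n, .falsum => n
  | n, .equal _ _ => n
  | n, .rel _ _ => n
  | _, .imp f g => max (bd f) (bd g)
  | _, .all f => bd f

theorem le_bd : ∀ {n : ℕ} (φ : L.BoundedFormula Empty n), n ≤ bd φ
  | _, .falsum => le_rfl
  | _, .equal _ _ => le_rfl
  | _, .rel _ _ => le_rfl
  | _, .imp f _ => (le_bd f).trans (le_max_left _ _)
  | _, .all f => (Nat.le_succ _).trans (le_bd f)

/-- One half of the back-and-forth extension property up to size `q`. -/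
def Forth (L : FirstOrder.Language.{u, v}) (M N : Type*) [L.Structure M] [L.Structure N]
    (q : ℕ) : Prop :=
  ∀ m, m < q → ∀ (a : Fin m → M) (b : Fin m → N), TEquiv (L := L) a b →
    ∀ c : M, ∃ d : N, TEquiv (L := L) (Fin.snoc a c : Fin (m + 1) → M) (Fin.snoc b d : Fin (m+1) → N)

theorem TEquiv.symm {M N : Type*} [L.Structure M] [L.Structure N] {m : ℕ} {a : Fin m → M}
    {b : Fin m → N} (h : TEquiv (L := L) a b) : TEquiv (L := L) b a :=
  ⟨fun i j => (h.1 i j).symm, fun k R f => (h.2 k R f).symm⟩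

theorem TEquiv.trans {M N P : Type*} [L.Structure M] [L.Structure N] [L.Structure P] {m : ℕ}
    {a : Fin m → M} {b : Fin m → N} {c : Fin m → P} (h : TEquiv (L := L) a b)
    (h' : TEquiv (L := L) b c) : TEquiv (L := L) a c :=
  ⟨fun i j => (h.1 i j).trans (h'.1 i j), fun k R f => (h.2 k R f).trans (h'.2 k R f)⟩

theorem TEquiv.embedding {M N : Type*} [L.Structure M] [L.Structure N] {m : ℕ}
    (a : Fin m → M) (e : M ↪[L] N) : TEquiv (L := L) a (fun i => e (a i)) :=
  ⟨fun i j => (e.injective.eq_iff).symm, fun k R f => (e.map_rel R (fun i => a (f i))).symm⟩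

theorem transfer [L.IsRelational] {M N : Type*} [L.Structure M] [L.Structure N] {q : ℕ}
    (hMN : Forth L M N q) (hNM : Forth L N M q) (v : Empty → M) (w : Empty → N) :
    ∀ {n : ℕ} (φ : L.BoundedFormula Empty n), bd φ ≤ q →
      ∀ (a : Fin n → M) (b : Fin n → N), TEquiv (L := L) a b → (φ.Realize v a ↔ φ.Realize w b)
  | _, .falsum, _, _, _, _ => Iff.rfl
  | _, .equal t₁ t₂, _, _, _, h => h.equal v w t₁ t₂
  | _, .rel R ts, _, _, _, h => h.rel v w R ts
  | _, .imp f g, hq, a, b, h => by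
    rw [BoundedFormula.realize_imp, BoundedFormula.realize_imp,
      transfer hMN hNM v w f ((le_max_left _ _).trans hq) a b h,
      transfer hMN hNM v w g ((le_max_right _ _).trans hq) a b h]
  | n, .all f, hq, a, b, h => by
    have hn : n < q := lt_of_lt_of_le (Nat.lt_succ_self n) ((le_bd f).trans hq)
    rw [BoundedFormula.realize_all, BoundedFormula.realize_all]
    constructor
    · intro H d
      obtain ⟨c, hc⟩ := hNM n hn b a h.symm d
      exact (transfer hMN hNM v w f hq _ _ hc.symm).1 (H c)
    · intro H c
      obtain ⟨d, hd⟩ := hMN n hn a b h c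
      exact (transfer hMN hNM v w f hq _ _ hd).2 (H d)

theorem transfer_sentence [L.IsRelational] {M N : Type*} [L.Structure M] [L.Structure N]
    (φ : L.Sentence)
    (hMN : Forth L M N (bd φ)) (hNM : Forth L N M (bd φ)) (h0 : IsEmpty (L.Relations 0)) :
    M ⊨ φ ↔ N ⊨ φ := by
  refine transfer hMN hNM _ _ φ le_rfl _ _ ⟨fun i => i.elim0, fun k R f => ?_⟩
  cases k with
  | zero => exact h0.elim R
  | succ k => exact (f 0).elim0

/-! ### Basic facts on local classes -/

/-- The set of values of a tuple. -/
def img {n : ℕ} (t : Fin n → ℕ) : Finset ℕ := Finset.univ.image t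

theorem img_subset {n : ℕ} {t : Fin n → ℕ} {X : Finset ℕ} : img t ⊆ X ↔ ∀ i, t i ∈ X := by
  simp [img, Finset.image_subset_iff]

theorem img_comp {n k : ℕ} (t : Fin n → ℕ) (f : Fin k → Fin n) : img (fun i => t (f i)) ⊆ img t :=
  img_subset.2 fun i => by simp [img]

theorem finStruc_ext {A B : FinStruc L} (h : A.carrier = B.carrier)
    (h' : ∀ (n : ℕ) (R : L.Relations n) (t : Fin n → ℕ), t ∈ A.rel R ↔ t ∈ B.rel R) : A = B := by
  cases A with
  | mk c r hr =>
  cases B with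
  | mk c' r' hr' =>
  obtain rfl : c = c' := h
  obtain rfl : r = r' := by
    funext n R
    ext t
    exact h' n R t
  rfl

theorem img_rel {A : FinStruc L} {n : ℕ} {R : L.Relations n} {t : Fin n → ℕ} (h : t ∈ A.rel R) :
    img t ⊆ A.carrier := img_subset.2 (A.rel_mem R t h)

theorem realize_local [L.IsRelational] {M : Type*} [L.Structure M] {m : ℕ} (R : L.Relations m)
    (ψ : L.BoundedFormula Empty m) :
    (M ⊨ (BoundedFormula.alls
      ((Relations.boundedFormula R fun k => Term.var (Sum.inr k)).imp ψ) : L.Sentence)) ↔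
      ∀ xs : Fin m → M, Structure.RelMap R xs → ψ.Realize default xs := by
  exact BoundedFormula.realize_alls

theorem mem_of_local [L.IsRelational] {K : Set (FinStruc L)} (hK : IsLocalClass K) (C : FinStruc L)
    (h : ∀ (n : ℕ) (R : L.Relations n) (t : Fin n → ℕ), 0 < n → t ∈ C.rel R → ∃ A ∈ K,
      ∀ (n' : ℕ) (R' : L.Relations n') (t' : Fin n' → ℕ), img t' ⊆ img t →
        (t' ∈ C.rel R' ↔ t' ∈ A.rel R')) : C ∈ K := by
  obtain ⟨Φ, hΦ, -, rfl⟩ := hK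
  intro φ hφ
  obtain ⟨m, hm, R, ψ, hψ, rfl⟩ := hΦ φ hφ
  refine (realize_local R ψ).2 fun xs hxs => ?_
  obtain ⟨A, hA, hCA⟩ := h m R (fun i => (xs i : ℕ)) hm hxs
  have hA' := (realize_local R ψ).1 (hA _ hφ)
  have hmem : (fun i => (xs i : ℕ)) ∈ A.rel R := (hCA _ _ _ subset_rfl).1 hxs
  have := hA' (fun i => ⟨xs i, A.rel_mem R _ hmem i⟩) hmem
  refine (TEquiv.qf ?_ _ _ hψ).1 this
  refine ⟨fun i j => ?_, fun k R' f => ?_⟩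
  · exact Subtype.mk_eq_mk.trans Subtype.ext_iff.symm
  exact (hCA k R' (fun i => (xs (f i) : ℕ)) (img_comp (fun i => (xs i : ℕ)) f)).symm

theorem mem_of_empty [L.IsRelational] {K : Set (FinStruc L)} (hK : IsLocalClass K) (C : FinStruc L)
    (h : C.carrier = ∅) : C ∈ K := by
  refine mem_of_local hK C fun n R t hn ht => ?_
  have := C.rel_mem R t ht ⟨0, hn⟩
  simp [h] at this

theorem mem_of_equiv [L.IsRelational] {K : Set (FinStruc L)} (hK : IsLocalClass K) {A C : FinStruc L}
    (hA : A ∈ K) (e : {x : ℕ // x ∈ C.carrier} ≃[L] {x : ℕ // x ∈ A.carrier}) : C ∈ K := by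
  obtain ⟨Φ, hΦ, -, rfl⟩ := hK
  intro φ hφ
  exact (StrongHomClass.realize_sentence e φ).2 (hA φ hφ)

theorem injective_of_mem [L.IsRelational] {K : Set (FinStruc L)} (hK : IsLocalClass K)
    {A : FinStruc L} (hA : A ∈ K) {n : ℕ} {R : L.Relations n} {t : Fin n → ℕ} (ht : t ∈ A.rel R) :
    Function.Injective t := by
  obtain ⟨Φ, hΦ, hGI, rfl⟩ := hK
  intro i j hij
  by_contra hne
  have h1 := hA _ (hGI ⟨n, R, i, j, hne, rfl⟩)
  have h2 := (realize_local R _).1 h1 (fun i => ⟨t i, A.rel_mem R t ht i⟩) ht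
  simp at h2
  exact h2 hij

theorem card_img_of_mem [L.IsRelational] {K : Set (FinStruc L)} (hK : IsLocalClass K)
    {A : FinStruc L} (hA : A ∈ K) {n : ℕ} {R : L.Relations n} {t : Fin n → ℕ} (ht : t ∈ A.rel R) :
    (img t).card = n := by
  rw [img, Finset.card_image_of_injective _ (injective_of_mem hK hA ht)]
  simp

theorem restrict_mem [L.IsRelational] {K : Set (FinStruc L)} (hK : IsLocalClass K)
    {A : FinStruc L} (hA : A ∈ K) (X : Finset ℕ) : A.restrict X ∈ K := by
  refine mem_of_local hK _ fun n R t _ ht => ⟨A, hA, fun n' R' t' h' => ?_⟩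
  exact ⟨fun h => h.1, fun h => ⟨h, img_subset.1 (h'.trans (img_subset.2 ht.2))⟩⟩

/-- Relabelling a structure along a permutation. -/
def mapPerm (B : FinStruc L) (σ : Equiv.Perm ℕ) : FinStruc L where
  carrier := B.carrier.image σ
  rel := fun _ R => { t | (fun i => σ.symm (t i)) ∈ B.rel R }
  rel_mem := fun _ R t ht i => Finset.mem_image.2 ⟨σ.symm (t i), B.rel_mem R _ ht i, by simp⟩

theorem mapPerm_mem [L.IsRelational] {K : Set (FinStruc L)} (hK : IsLocalClass K)
    {A : FinStruc L} (hA : A ∈ K) (σ : Equiv.Perm ℕ) : mapPerm A σ ∈ K := by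
  have hc : ∀ x, x ∈ (mapPerm A σ).carrier ↔ σ.symm x ∈ A.carrier := by
    intro x
    simp only [mapPerm, Finset.mem_image]
    constructor
    · rintro ⟨y, hy, rfl⟩; simpa using hy
    · intro h; exact ⟨_, h, by simp⟩
  refine mem_of_equiv hK hA ⟨σ.symm.subtypeEquiv hc, fun f => isEmptyElim f, fun R t => ?_⟩
  rfl

/-- The gluing of the part of `P` lying on `D` with `T`. -/
def glue (D : Finset (Finset ℕ)) (P T : FinStruc L) : FinStruc L where
  carrier := P.carrier ∪ T.carrier
  rel := fun _ R => { t | (img t ∈ D ∧ t ∈ P.rel R) ∨ t ∈ T.rel R }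
  rel_mem := by
    rintro n R t (h | h) i
    · exact Finset.mem_union_left _ (P.rel_mem R t h.2 i)
    · exact Finset.mem_union_right _ (T.rel_mem R t h i)

/-- Agreement of two structures on all tuples whose set of values is in `D`. -/
def Agree (D : Finset (Finset ℕ)) (P Q : FinStruc L) : Prop :=
  ∀ (n : ℕ) (R : L.Relations n) (t : Fin n → ℕ), img t ∈ D → (t ∈ P.rel R ↔ t ∈ Q.rel R)

theorem Agree.refl (D : Finset (Finset ℕ)) (P : FinStruc L) : Agree D P P :=
  fun _ _ _ _ => Iff.rfl

theorem Agree.symm {D : Finset (Finset ℕ)} {P Q : FinStruc L} (h : Agree D P Q) : Agree D Q P :=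
  fun n R t ht => (h n R t ht).symm

theorem Agree.trans {D : Finset (Finset ℕ)} {P Q S : FinStruc L} (h : Agree D P Q)
    (h' : Agree D Q S) : Agree D P S :=
  fun n R t ht => (h n R t ht).trans (h' n R t ht)

theorem Agree.mono {D E : Finset (Finset ℕ)} {P Q : FinStruc L} (h : Agree E P Q)
    (hDE : D ⊆ E) : Agree D P Q :=
  fun n R t ht => h n R t (hDE ht)

theorem agree_restrict (P : FinStruc L) (X : Finset ℕ) : Agree X.powerset (P.restrict X) P := by
  intro n R t ht
  have := img_subset.1 (Finset.mem_powerset.1 ht)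
  exact ⟨fun h => h.1, fun h => ⟨h, this⟩⟩

theorem glue_agree_left {D : Finset (Finset ℕ)} {P T : FinStruc L}
    (h : Agree (D.filter (· ⊆ T.carrier)) P T) : Agree D (glue D P T) P := by
  intro n R t ht
  constructor
  · rintro (h1 | h1)
    · exact h1.2
    · exact (h n R t (Finset.mem_filter.2 ⟨ht, img_rel h1⟩)).2 h1
  · exact fun h1 => Or.inl ⟨ht, h1⟩

theorem glue_agree_right {D : Finset (Finset ℕ)} {P T : FinStruc L}
    (h : Agree (D.filter (· ⊆ T.carrier)) P T) : Agree T.carrier.powerset (glue D P T) T := by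
  intro n R t ht
  constructor
  · rintro (h1 | h1)
    · exact (h n R t (Finset.mem_filter.2 ⟨h1.1, Finset.mem_powerset.1 ht⟩)).1 h1.2
    · exact h1
  · exact fun h1 => Or.inr h1

theorem glue_mem [L.IsRelational] {K : Set (FinStruc L)} (hK : IsLocalClass K)
    {D : Finset (Finset ℕ)} (hD : IsLowerSet (D : Set (Finset ℕ))) {P T : FinStruc L}
    (hP : P ∈ K) (hT : T ∈ K) (h : Agree (D.filter (· ⊆ T.carrier)) P T) : glue D P T ∈ K := by
  refine mem_of_local hK _ fun n R t _ ht => ?_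
  rcases ht with ht | ht
  · refine ⟨P, hP, fun n' R' t' h' => glue_agree_left h n' R' t' ?_⟩
    exact hD h' ht.1
  · refine ⟨T, hT, fun n' R' t' h' => glue_agree_right h n' R' t' ?_⟩
    exact Finset.mem_powerset.2 (h'.trans (img_rel ht))


/-! ### Counting structures -/

/-- A uniform bound for the number of members of a local class on a set of size at most `q`. -/
noncomputable def cbound (L : FirstOrder.Language.{u, v}) (q : ℕ) : ℕ :=
  Nat.card (∀ k : Fin (q + 1), L.Relations k → Set (Fin k → Fin (q + 1)))

theorem exists_injOn (q : ℕ) (Z : Finset ℕ) (hZ : Z.card ≤ q) :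
    ∃ e : ℕ → Fin (q + 1), Set.InjOn e Z := by
  have : Fintype.card Z ≤ Fintype.card (Fin (q + 1)) := by simp; omega
  obtain ⟨f⟩ := Function.Embedding.nonempty_of_card_le this
  classical
  refine ⟨fun x => if h : x ∈ Z then f ⟨x, h⟩ else 0, ?_⟩
  intro x hx y hy hxy
  have hx' : x ∈ Z := hx
  have hy' : y ∈ Z := hy
  simp only [hx', hy', dite_true] at hxy
  simpa using f.injective hxy

theorem count_aux [L.IsRelational] [∀ n, Finite (L.Relations n)] {K : Set (FinStruc L)}
    (hK : IsLocalClass K) (q : ℕ) (Z : Finset ℕ) (hZ : Z.card ≤ q) :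
    { T | T ∈ K ∧ T.carrier = Z }.Finite ∧ { T | T ∈ K ∧ T.carrier = Z }.ncard ≤ cbound L q := by
  obtain ⟨e, he⟩ := exists_injOn q Z hZ
  let F : FinStruc L → (∀ k : Fin (q + 1), L.Relations k → Set (Fin k → Fin (q + 1))) :=
    fun T k R => { s | ∃ t ∈ T.rel R, s = fun i => e (t i) }
  have key : ∀ T₁ T₂ : FinStruc L, T₁ ∈ K → T₁.carrier = Z → T₂.carrier = Z → F T₁ = F T₂ →
      ∀ (n : ℕ) (R : L.Relations n) (t : Fin n → ℕ), t ∈ T₁.rel R → t ∈ T₂.rel R := by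
    intro T₁ T₂ h₁ hc₁ hc₂ hF n R t ht
    have hn : n < q + 1 := by
      have h1 := card_img_of_mem hK h₁ ht
      have h2 := Finset.card_le_card (img_rel ht)
      rw [hc₁] at h2
      omega
    have h3 : (fun i => e (t i)) ∈ F T₁ ⟨n, hn⟩ R := ⟨t, ht, rfl⟩
    rw [hF] at h3
    obtain ⟨t', ht', h4⟩ := h3
    have : t = t' := by
      funext i
      refine he ?_ ?_ (congrFun h4 i)
      · rw [← hc₁]; exact T₁.rel_mem R t ht i
      · rw [← hc₂]; exact T₂.rel_mem R t' ht' i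
    rw [this]; exact ht'
  have hinj : Set.InjOn F { T | T ∈ K ∧ T.carrier = Z } := by
    intro T₁ h₁ T₂ h₂ hF
    refine finStruc_ext (h₁.2.trans h₂.2.symm) fun n R t => ⟨?_, ?_⟩
    · exact key T₁ T₂ h₁.1 h₁.2 h₂.2 hF n R t
    · exact key T₂ T₁ h₂.1 h₂.2 h₁.2 hF.symm n R t
  refine ⟨Set.Finite.of_finite_image (Set.toFinite _) hinj, ?_⟩
  rw [← Set.ncard_image_of_injOn hinj, cbound, ← Set.ncard_univ]
  exact Set.ncard_le_ncard (Set.subset_univ _)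

/-- The possible structures of full arity on `Z` given the structure on proper subsets. -/
def Tset (K : Set (FinStruc L)) (P : FinStruc L) (Z : Finset ℕ) : Set (FinStruc L) :=
  { T | T ∈ K ∧ T.carrier = Z ∧ Agree (Z.powerset.erase Z) T P }

/-- The number of possible structures of full arity on `Z`. -/
noncomputable def nn (K : Set (FinStruc L)) (P : FinStruc L) (Z : Finset ℕ) : ℕ :=
  (Tset K P Z).ncard

theorem Tset_finite [L.IsRelational] [∀ n, Finite (L.Relations n)] {K : Set (FinStruc L)}
    (hK : IsLocalClass K) (P : FinStruc L) (Z : Finset ℕ) : (Tset K P Z).Finite :=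
  (count_aux hK _ Z le_rfl).1.subset fun _ hT => ⟨hT.1, hT.2.1⟩

theorem nn_le [L.IsRelational] [∀ n, Finite (L.Relations n)] {K : Set (FinStruc L)}
    (hK : IsLocalClass K) (P : FinStruc L) (Z : Finset ℕ) (q : ℕ) (hZ : Z.card ≤ q) :
    nn K P Z ≤ cbound L q :=
  (Set.ncard_le_ncard (t := { T | T ∈ K ∧ T.carrier = Z }) (fun _ hT => ⟨hT.1, hT.2.1⟩)
    (count_aux hK q Z hZ).1).trans (count_aux hK q Z hZ).2

theorem restrict_mem_Tset [L.IsRelational] {K : Set (FinStruc L)}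
    (hK : IsLocalClass K) {P S : FinStruc L} (hS : S ∈ K) {Z : Finset ℕ} (hZ : Z ⊆ S.carrier)
    (h : Agree (Z.powerset.erase Z) S P) : S.restrict Z ∈ Tset K P Z :=
  ⟨restrict_mem hK hS Z, Finset.inter_eq_right.2 hZ,
    ((agree_restrict S Z).mono (Finset.erase_subset _ _)).trans h⟩

theorem nn_pos [L.IsRelational] [∀ n, Finite (L.Relations n)] {K : Set (FinStruc L)}
    (hK : IsLocalClass K) {P : FinStruc L} (hP : P ∈ K) {Z : Finset ℕ} (hZ : Z ⊆ P.carrier) :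
    0 < nn K P Z :=
  (Set.ncard_pos (Tset_finite hK P Z)).2 ⟨_, restrict_mem_Tset hK hP hZ (Agree.refl _ _)⟩

theorem nn_congr {K : Set (FinStruc L)} {P Q : FinStruc L} {Z : Finset ℕ}
    (h : Agree (Z.powerset.erase Z) P Q) : nn K P Z = nn K Q Z := by
  have : Tset K P Z = Tset K Q Z := by
    ext T
    exact ⟨fun hT => ⟨hT.1, hT.2.1, hT.2.2.trans h⟩, fun hT => ⟨hT.1, hT.2.1, hT.2.2.trans h.symm⟩⟩
  rw [nn, nn, this]

theorem erase_subset_of_lower {D : Finset (Finset ℕ)} (hD : IsLowerSet (D : Set (Finset ℕ)))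
    {Z : Finset ℕ} (hZ : Z ∈ D) : Z.powerset.erase Z ⊆ D := by
  intro Y hY
  exact hD (Finset.mem_powerset.1 (Finset.mem_of_mem_erase hY)) hZ

/-- The weight of a partial structure. -/
noncomputable def W (K : Set (FinStruc L)) (D : Finset (Finset ℕ)) (P : FinStruc L) : ENNReal :=
  ∏ Z ∈ D, (nn K P Z : ENNReal)⁻¹

theorem W_congr {K : Set (FinStruc L)} {D : Finset (Finset ℕ)}
    (hD : IsLowerSet (D : Set (Finset ℕ))) {P Q : FinStruc L} (h : Agree D P Q) :
    W K D P = W K D Q := by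
  refine Finset.prod_congr rfl fun Z hZ => ?_
  rw [nn_congr (h.mono (erase_subset_of_lower hD hZ))]

/-- Cylinder events. -/
def cyl (K : Set (FinStruc L)) (N : ℕ) (D : Finset (Finset ℕ)) (P : FinStruc L) :
    Set (FinStruc L) :=
  { S | S ∈ KNset K N ∧ Agree D S P }

theorem cyl_congr {K : Set (FinStruc L)} {N : ℕ} {D : Finset (Finset ℕ)} {P Q : FinStruc L}
    (h : Agree D P Q) : cyl K N D P = cyl K N D Q := by
  ext S
  exact ⟨fun hS => ⟨hS.1, hS.2.trans h⟩, fun hS => ⟨hS.1, hS.2.trans h.symm⟩⟩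

/-- A finitely additive set function. -/
structure Add0 (ν : Set (FinStruc L) → ENNReal) : Prop where
  empty : ν ∅ = 0
  union : ∀ s t, Disjoint s t → ν (s ∪ t) = ν s + ν t

theorem Add0.mono {ν : Set (FinStruc L) → ENNReal} (h : Add0 ν) {s t : Set (FinStruc L)}
    (hst : s ⊆ t) : ν s ≤ ν t := by
  rw [← Set.union_sdiff_cancel hst, h.union _ _ Set.disjoint_sdiff_right]
  exact le_self_add

theorem Add0.biUnion {ν : Set (FinStruc L) → ENNReal} (h : Add0 ν) {ι : Type*} (s : Finset ι)
    (f : ι → Set (FinStruc L)) (hd : ∀ i ∈ s, ∀ j ∈ s, i ≠ j → Disjoint (f i) (f j)) :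
    ν (⋃ i ∈ s, f i) = ∑ i ∈ s, ν (f i) := by
  classical
  induction s using Finset.induction_on with
  | empty => simp [h.empty]
  | insert a s ha ih =>
    rw [Finset.set_biUnion_insert, h.union, Finset.sum_insert ha, ih]
    · exact fun i hi j hj => hd i (Finset.mem_insert_of_mem hi) j (Finset.mem_insert_of_mem hj)
    · refine Set.disjoint_iUnion₂_right.2 fun i hi => hd a (Finset.mem_insert_self _ _) i
        (Finset.mem_insert_of_mem hi) ?_
      rintro rfl
      exact ha hi

theorem Add0.le_biUnion {ν : Set (FinStruc L) → ENNReal} (h : Add0 ν) {ι : Type*} (s : Finset ι)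
    (f : ι → Set (FinStruc L)) : ν (⋃ i ∈ s, f i) ≤ ∑ i ∈ s, ν (f i) := by
  classical
  induction s using Finset.induction_on with
  | empty => simp [h.empty]
  | insert a s ha ih =>
    rw [Finset.set_biUnion_insert, Finset.sum_insert ha, ← Set.union_sdiff_self,
      h.union _ _ Set.disjoint_sdiff_right]
    exact add_le_add le_rfl ((h.mono Set.sdiff_subset).trans ih)

theorem lower_insert {D : Finset (Finset ℕ)} (hD : IsLowerSet (D : Set (Finset ℕ)))
    {Z : Finset ℕ} (hZ : Z.powerset.erase Z ⊆ D) :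
    IsLowerSet ((insert Z D : Finset (Finset ℕ)) : Set (Finset ℕ)) := by
  intro X Y hYX hX
  simp only [Finset.coe_insert, Set.mem_insert_iff, Finset.mem_coe] at hX ⊢
  rcases hX with rfl | hX
  · by_cases h : Y = X
    · exact Or.inl h
    · exact Or.inr (hZ (Finset.mem_erase.2 ⟨h, Finset.mem_powerset.2 hYX⟩))
  · exact Or.inr (hD hYX hX)

theorem step [L.IsRelational] [∀ n, Finite (L.Relations n)] {K : Set (FinStruc L)}
    (hK : IsLocalClass K) {ν : Set (FinStruc L) → ENNReal} (hν : Add0 ν) {N : ℕ}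
    {D : Finset (Finset ℕ)} (hD : IsLowerSet (D : Set (Finset ℕ))) {Z : Finset ℕ}
    (hZN : Z ⊆ Finset.range N) (hZD : Z ∉ D) (hZ : Z.powerset.erase Z ⊆ D)
    {P : FinStruc L} (hP : P ∈ KNset K N) (v : ENNReal)
    (hv : ∀ P' ∈ cyl K N D P, ν (cyl K N (insert Z D) P') = v) :
    ν (cyl K N D P) = nn K P Z * v := by
  have hfilt : D.filter (· ⊆ Z) = Z.powerset.erase Z := by
    ext Y
    simp only [Finset.mem_filter, Finset.mem_erase, Finset.mem_powerset]
    constructor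
    · rintro ⟨h1, h2⟩
      refine ⟨?_, h2⟩
      rintro rfl
      exact hZD h1
    · rintro ⟨h1, h2⟩
      exact ⟨hZ (Finset.mem_erase.2 ⟨h1, Finset.mem_powerset.2 h2⟩), h2⟩
  have hag : ∀ T ∈ Tset K P Z, Agree (D.filter (· ⊆ T.carrier)) P T := by
    intro T hT
    rw [hT.2.1, hfilt]
    exact hT.2.2.symm
  have hgl : ∀ T ∈ Tset K P Z, glue D P T ∈ cyl K N D P := by
    intro T hT
    refine ⟨⟨glue_mem hK hD hP.1 hT.1 (hag T hT), ?_⟩, glue_agree_left (hag T hT)⟩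
    change P.carrier ∪ T.carrier = _
    rw [hT.2.1, hP.2]
    exact Finset.union_eq_left.2 hZN
  have hres : ∀ T ∈ Tset K P Z, ∀ S ∈ cyl K N (insert Z D) (glue D P T), T = S.restrict Z := by
    intro T hT S hS
    have hZS : Z ⊆ S.carrier := by rw [hS.1.2]; exact hZN
    refine finStruc_ext ?_ fun n R t => ?_
    · rw [hT.2.1]; exact (Finset.inter_eq_right.2 hZS).symm
    · by_cases ht : img t ⊆ Z
      · have h1 := glue_agree_right (hag T hT) n R t (by rw [hT.2.1]; exact Finset.mem_powerset.2 ht)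
        have h2 := hS.2 n R t (by
          by_cases h : img t = Z
          · rw [h]; exact Finset.mem_insert_self _ _
          · exact Finset.mem_insert_of_mem
              (hZ (Finset.mem_erase.2 ⟨h, Finset.mem_powerset.2 ht⟩)))
        have h3 := agree_restrict S Z n R t (Finset.mem_powerset.2 ht)
        exact h1.symm.trans (h2.symm.trans h3.symm)
      · constructor
        · intro h; exact absurd (hT.2.1 ▸ img_rel h) ht
        · intro h; exact absurd (img_subset.2 h.2) ht
  have hU : cyl K N D P = ⋃ T ∈ (Tset_finite hK P Z).toFinset, cyl K N (insert Z D) (glue D P T) := by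
    ext S
    simp only [Set.mem_iUnion, Set.Finite.mem_toFinset, exists_prop]
    constructor
    · intro hS
      have hZS : Z ⊆ S.carrier := by rw [hS.1.2]; exact hZN
      have hT := restrict_mem_Tset (P := P) hK hS.1.1 hZS (hS.2.mono hZ)
      refine ⟨S.restrict Z, hT, hS.1, ?_⟩
      intro n R t ht
      rcases Finset.mem_insert.1 ht with h | h
      · have h1 := glue_agree_right (hag _ hT) n R t
          (by rw [hT.2.1]; exact Finset.mem_powerset.2 h.le)
        exact (agree_restrict S Z n R t (Finset.mem_powerset.2 h.le)).symm.trans h1.symm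
      · exact (hS.2 n R t h).trans (glue_agree_left (hag _ hT) n R t h).symm
    · rintro ⟨T, hT, hS⟩
      exact ⟨hS.1, (hS.2.mono (Finset.subset_insert _ _)).trans (hgl T hT).2⟩
  rw [hU, hν.biUnion]
  · rw [Finset.sum_congr rfl (fun T hT => hv _ (hgl T ((Set.Finite.mem_toFinset _).1 hT)))]
    rw [Finset.sum_const, nsmul_eq_mul, nn, Set.ncard_eq_toFinset_card _ (Tset_finite hK P Z)]
  · intro T hT T' hT' hne
    rw [Set.Finite.mem_toFinset] at hT hT'
    rw [Set.disjoint_left]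
    intro S hS hS'
    exact hne ((hres T hT S hS).trans (hres T' hT' S hS').symm)

/-- Subsets of `{0, …, N-1}` of size at most `k`. -/
def Dk (N k : ℕ) : Finset (Finset ℕ) := (Finset.range N).powerset.filter (fun Z => Z.card ≤ k)

theorem mem_Dk {N k : ℕ} {Z : Finset ℕ} : Z ∈ Dk N k ↔ Z ⊆ Finset.range N ∧ Z.card ≤ k := by
  simp [Dk]

theorem Dk_lower (N k : ℕ) : IsLowerSet (Dk N k : Set (Finset ℕ)) := by
  intro X Y hYX hX
  have := mem_Dk.1 hX
  exact mem_Dk.2 ⟨hYX.trans this.1, (Finset.card_le_card hYX).trans this.2⟩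

theorem Dk_mono (N k : ℕ) : Dk N k ⊆ Dk N (k + 1) := fun Z hZ =>
  mem_Dk.2 ⟨(mem_Dk.1 hZ).1, (mem_Dk.1 hZ).2.trans (Nat.le_succ k)⟩

theorem frame_eq_of_agree [L.IsRelational] {K : Set (FinStruc L)} (hK : IsLocalClass K) {N k : ℕ}
    {S P : FinStruc L} (hS : S ∈ KNset K N) (hP : P ∈ KNset K N) (h : Agree (Dk N k) S P) :
    S.frame k = P.frame k := by
  refine finStruc_ext (hS.2.trans hP.2.symm) fun n R t => ?_
  by_cases hn : n ≤ k
  · simp only [FinStruc.frame, hn, if_true]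
    constructor
    · intro ht
      refine (h n R t (mem_Dk.2 ⟨hS.2 ▸ img_rel ht, ?_⟩)).1 ht
      rw [card_img_of_mem hK hS.1 ht]; exact hn
    · intro ht
      refine (h n R t (mem_Dk.2 ⟨hP.2 ▸ img_rel ht, ?_⟩)).2 ht
      rw [card_img_of_mem hK hP.1 ht]; exact hn
  · simp [FinStruc.frame, hn]

theorem agree_of_frame_eq [L.IsRelational] {K : Set (FinStruc L)} (hK : IsLocalClass K) {N k : ℕ}
    {S P : FinStruc L} (hS : S ∈ KNset K N) (hP : P ∈ KNset K N) (h : S.frame k = P.frame k) :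
    Agree (Dk N k) S P := by
  intro n R t ht
  have h1 : t ∈ (S.frame k).rel R ↔ t ∈ (P.frame k).rel R := by rw [h]
  by_cases hn : n ≤ k
  · simpa only [FinStruc.frame, hn, if_true] using h1
  · constructor
    · intro h2
      have := card_img_of_mem hK hS.1 h2
      have := (mem_Dk.1 ht).2
      omega
    · intro h2
      have := card_img_of_mem hK hP.1 h2
      have := (mem_Dk.1 ht).2
      omega

theorem restrict_eq {S : FinStruc L} {X : Finset ℕ} (h : S.carrier = X) : S.restrict X = S := by
  refine finStruc_ext (by simp [FinStruc.restrict, h]) fun n R t => ?_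
  exact ⟨fun h => h.1, fun ht => ⟨ht, h ▸ S.rel_mem R t ht⟩⟩

theorem ONset_eq_cyl [L.IsRelational] {K : Set (FinStruc L)} (hK : IsLocalClass K) {N k : ℕ}
    {P : FinStruc L} (hP : P ∈ KNset K N) : ONset K N P k = cyl K N (Dk N k) P := by
  ext S
  constructor
  · rintro ⟨hS, h⟩
    rw [restrict_eq (by exact hS.2.trans hP.2.symm)] at h
    exact ⟨hS, agree_of_frame_eq hK hS hP h⟩
  · rintro ⟨hS, h⟩
    refine ⟨hS, ?_⟩
    rw [restrict_eq (by exact hS.2.trans hP.2.symm)]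
    exact frame_eq_of_agree hK hS hP h

theorem Ncount_congr {K : Set (FinStruc L)} {P Q : FinStruc L} {k : ℕ}
    (hc : P.carrier = Q.carrier) (h : P.frame k = Q.frame k) : Ncount K P k = Ncount K Q k := by
  rw [Ncount, Ncount, KsetFr, KsetFr, hc, h]

theorem nn_empty [L.IsRelational] {K : Set (FinStruc L)} (hK : IsLocalClass K)
    (h0 : IsEmpty (L.Relations 0)) (P : FinStruc L) : nn K P ∅ = 1 := by
  have hno : ∀ T : FinStruc L, T.carrier = ∅ → ∀ (n : ℕ) (R : L.Relations n) (t : Fin n → ℕ),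
      t ∉ T.rel R := by
    intro T hT n R t ht
    cases n with
    | zero => exact h0.elim R
    | succ n =>
      have := T.rel_mem R t ht 0
      simp [hT] at this
  rw [nn, Set.ncard_eq_one]
  refine ⟨⟨∅, fun _ _ => ∅, by simp⟩, ?_⟩
  ext T
  simp only [Set.mem_singleton_iff]
  constructor
  · intro hT
    refine finStruc_ext hT.2.1 fun n R t => ?_
    simp [hno T hT.2.1 n R t]
  · rintro rfl
    exact ⟨mem_of_empty hK _ rfl, rfl, fun n R t ht => by simp at ht⟩

theorem formula_Dk [L.IsRelational] [∀ n, Finite (L.Relations n)] {K : Set (FinStruc L)}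
    (hK : IsLocalClass K) {ν : Set (FinStruc L) → ENNReal} (hν : Add0 ν) {N : ℕ}
    (hr0 : IsEmpty (L.Relations 0))
    (h0 : ∀ A ∈ K, A.carrier ⊆ Finset.range N → ν (ONset K N A 0) = 1)
    (hrec : ∀ A ∈ K, A.carrier ⊆ Finset.range N → ∀ k : ℕ,
      ν (ONset K N A (k + 1)) = ν (ONset K N A k) / (Ncount K A k : ENNReal)) (k : ℕ) :
    ∀ P ∈ KNset K N, ν (cyl K N (Dk N k) P) = W K (Dk N k) P := by
  induction k with
  | zero =>
    intro P hP
    rw [← ONset_eq_cyl hK hP, h0 P hP.1 hP.2.le, W]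
    have : Dk N 0 = {∅} := by
      ext Z
      simp only [mem_Dk, Nat.le_zero, Finset.card_eq_zero, Finset.mem_singleton]
      exact ⟨fun h => h.2, fun h => ⟨by simp [h], h⟩⟩
    rw [this, Finset.prod_singleton, nn_empty hK hr0]
    simp
  | succ k ih =>
    intro P hP
    set v := ν (cyl K N (Dk N (k + 1)) P) with hv
    have hvc : ∀ P' ∈ cyl K N (Dk N k) P, ν (cyl K N (Dk N (k + 1)) P') = v := by
      intro P' hP'
      rw [hv, ← ONset_eq_cyl hK hP, ← ONset_eq_cyl hK hP'.1, hrec P hP.1 hP.2.le,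
        hrec P' hP'.1.1 hP'.1.2.le, ONset_eq_cyl hK hP, ONset_eq_cyl hK hP'.1, cyl_congr hP'.2,
        Ncount_congr (hP'.1.2.trans hP.2.symm) (frame_eq_of_agree hK hP'.1 hP hP'.2)]
    have claim : ∀ E : Finset (Finset ℕ), E ⊆ Dk N (k + 1) \ Dk N k → ∀ P' ∈ cyl K N (Dk N k) P,
        ν (cyl K N (Dk N (k + 1) \ E) P') = (∏ Z ∈ E, (nn K P Z : ENNReal)) * v := by
      intro E
      induction E using Finset.induction_on with
      | empty =>
        intro _ P' hP'
        simpa using hvc P' hP'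
      | insert Z E hZE ihE =>
        intro hE P' hP'
        have hZ := Finset.mem_sdiff.1 (hE (Finset.mem_insert_self Z E))
        have hE' : E ⊆ Dk N (k + 1) \ Dk N k := (Finset.subset_insert Z E).trans hE
        have hsub : Dk N k ⊆ Dk N (k + 1) \ insert Z E := by
          intro Y hY
          refine Finset.mem_sdiff.2 ⟨Dk_mono N k hY, fun h => ?_⟩
          exact (Finset.mem_sdiff.1 (hE h)).2 hY
        have hproper : ∀ X ∈ Dk N (k + 1), X.powerset.erase X ⊆ Dk N k := by
          intro X hX Y hY
          have h1 := Finset.mem_erase.1 hY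
          have h2 := Finset.mem_powerset.1 h1.2
          have h3 := Finset.card_lt_card (Finset.ssubset_iff_subset_ne.2 ⟨h2, h1.1⟩)
          have h4 := mem_Dk.1 hX
          exact mem_Dk.2 ⟨h2.trans h4.1, by omega⟩
        have hlow : IsLowerSet ((Dk N (k + 1) \ insert Z E : Finset (Finset ℕ)) : Set (Finset ℕ)) := by
          intro X Y hYX hX
          by_cases h : Y = X
          · rw [h]; exact hX
          · exact hsub (hproper X (Finset.mem_sdiff.1 hX).1
              (Finset.mem_erase.2 ⟨h, Finset.mem_powerset.2 hYX⟩))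
        have hins : insert Z (Dk N (k + 1) \ insert Z E) = Dk N (k + 1) \ E := by
          ext Y
          simp only [Finset.mem_insert, Finset.mem_sdiff, not_or]
          constructor
          · rintro (rfl | h)
            · exact ⟨hZ.1, hZE⟩
            · exact ⟨h.1, h.2.2⟩
          · intro h
            by_cases hY : Y = Z
            · exact Or.inl hY
            · exact Or.inr ⟨h.1, hY, h.2⟩
        rw [step hK hν hlow (mem_Dk.1 hZ.1).1 (by simp) ((hproper Z hZ.1).trans hsub) hP'.1
          ((∏ Z ∈ E, (nn K P Z : ENNReal)) * v), Finset.prod_insert hZE,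
          nn_congr (hP'.2.mono (hproper Z hZ.1)), mul_assoc]
        intro Q hQ
        rw [hins]
        exact ihE hE' Q ⟨hQ.1, (hQ.2.mono hsub).trans hP'.2⟩
    have h1 := claim _ subset_rfl P ⟨hP, Agree.refl _ _⟩
    rw [Finset.sdiff_sdiff_eq_self (Dk_mono N k), ih P hP] at h1
    have hne : (∏ Z ∈ Dk N (k + 1) \ Dk N k, (nn K P Z : ENNReal)) ≠ 0 := by
      refine Finset.prod_ne_zero_iff.2 fun Z hZ => ?_
      have := nn_pos hK hP.1 (Z := Z) (by
        rw [hP.2]; exact (mem_Dk.1 (Finset.mem_sdiff.1 hZ).1).1)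
      exact_mod_cast this.ne'
    rw [W, ← Finset.prod_sdiff (Dk_mono N k)]
    change v = _ * W K (Dk N k) P
    rw [h1, ← mul_assoc, ← Finset.prod_mul_distrib, Finset.prod_eq_one, one_mul]
    intro Z hZ
    exact ENNReal.inv_mul_cancel (Finset.prod_ne_zero_iff.1 hne Z hZ) (ENNReal.natCast_ne_top _)

theorem formula [L.IsRelational] [∀ n, Finite (L.Relations n)] {K : Set (FinStruc L)}
    (hK : IsLocalClass K) {ν : Set (FinStruc L) → ENNReal} (hν : Add0 ν) {N : ℕ}
    (hr0 : IsEmpty (L.Relations 0))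
    (h0 : ∀ A ∈ K, A.carrier ⊆ Finset.range N → ν (ONset K N A 0) = 1)
    (hrec : ∀ A ∈ K, A.carrier ⊆ Finset.range N → ∀ k : ℕ,
      ν (ONset K N A (k + 1)) = ν (ONset K N A k) / (Ncount K A k : ENNReal)) :
    ∀ (r : ℕ) (D : Finset (Finset ℕ)), IsLowerSet (D : Set (Finset ℕ)) →
      D ⊆ (Finset.range N).powerset → ((Finset.range N).powerset \ D).card = r →
      ∀ P ∈ KNset K N, ν (cyl K N D P) = W K D P := by
  intro r
  induction r with
  | zero =>
    intro D hD hDN hr P hP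
    have h1 : (Finset.range N).powerset ⊆ D := Finset.sdiff_eq_empty_iff_subset.1
      (Finset.card_eq_zero.1 hr)
    have h2 : D = Dk N N := by
      ext Z
      rw [mem_Dk]
      constructor
      · intro hZ
        have := Finset.mem_powerset.1 (hDN hZ)
        exact ⟨this, by simpa using Finset.card_le_card this⟩
      · intro hZ
        exact h1 (Finset.mem_powerset.2 hZ.1)
    rw [h2]
    exact formula_Dk hK hν hr0 h0 hrec N P hP
  | succ r ih =>
    intro D hD hDN hr P hP
    have hne : ((Finset.range N).powerset \ D).Nonempty := by
      rw [← Finset.card_pos, hr]; omega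
    obtain ⟨Z, hZ⟩ := Finset.exists_minimal hne
    have hZ1 := Finset.mem_sdiff.1 hZ.1
    have hZN := Finset.mem_powerset.1 hZ1.1
    have hZp : Z.powerset.erase Z ⊆ D := by
      intro Y hY
      have h1 := Finset.mem_erase.1 hY
      have h2 := Finset.mem_powerset.1 h1.2
      by_contra h3
      have h4 := hZ.2 (Finset.mem_sdiff.2 ⟨Finset.mem_powerset.2 (h2.trans hZN), h3⟩) h2
      exact h1.1 (Finset.Subset.antisymm h2 h4)
    have hcard : ((Finset.range N).powerset \ insert Z D).card = r := by
      rw [Finset.sdiff_insert, Finset.card_erase_of_mem hZ.1, hr]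
      rfl
    have hpos := nn_pos hK hP.1 (Z := Z) (by rw [hP.2]; exact hZN)
    rw [step hK hν hD hZN hZ1.2 hZp hP ((nn K P Z : ENNReal)⁻¹ * W K D P), ← mul_assoc,
      ENNReal.mul_inv_cancel, one_mul]
    · exact_mod_cast hpos.ne'
    · exact ENNReal.natCast_ne_top _
    · intro Q hQ
      rw [ih (insert Z D) (lower_insert hD hZp) (Finset.insert_subset hZ1.1 hDN) hcard Q hQ.1,
        W, Finset.prod_insert hZ1.2, nn_congr (hQ.2.mono hZp)]
      change _ * W K D Q = _
      rw [W_congr hD hQ.2]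


/-! ### The extension property holds with high probability -/

theorem decomp [L.IsRelational] [∀ n, Finite (L.Relations n)] {K : Set (FinStruc L)}
    (hK : IsLocalClass K) {ν : Set (FinStruc L) → ENNReal} (hν : Add0 ν) {N : ℕ}
    {D : Finset (Finset ℕ)} (U G : Set (FinStruc L)) (hU : U ⊆ KNset K N)
    (hinv : ∀ S ∈ U, ∀ S' ∈ KNset K N, Agree D S' S → S' ∈ U) (ε : ENNReal)
    (hε : ∀ P ∈ U, ε * ν (cyl K N D P) ≤ ν (cyl K N D P ∩ G)) : ε * ν U ≤ ν (U ∩ G) := by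
  have hfin : U.Finite := (count_aux hK _ (Finset.range N) le_rfl).1.subset hU
  have hfin2 : ((cyl K N D) '' U).Finite := hfin.image _
  have hUeq : U = ⋃ C ∈ hfin2.toFinset, C := by
    ext S
    simp only [Set.mem_iUnion, Set.Finite.mem_toFinset, exists_prop]
    constructor
    · intro hS
      exact ⟨_, ⟨S, hS, rfl⟩, hU hS, Agree.refl _ _⟩
    · rintro ⟨_, ⟨P, hP, rfl⟩, hS⟩
      exact hinv P hP S hS.1 hS.2
  have hdisj : ∀ C ∈ hfin2.toFinset, ∀ C' ∈ hfin2.toFinset, C ≠ C' → Disjoint C C' := by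
    intro C hC C' hC' hne
    rw [Set.Finite.mem_toFinset] at hC hC'
    obtain ⟨P, hP, rfl⟩ := hC
    obtain ⟨P', hP', rfl⟩ := hC'
    rw [Set.disjoint_left]
    intro S hS hS'
    exact hne (cyl_congr (hS.2.symm.trans hS'.2))
  have hUG : U ∩ G = ⋃ C ∈ hfin2.toFinset, C ∩ G := by
    conv_lhs => rw [hUeq]
    rw [Set.iUnion₂_inter]
  rw [hUG, hν.biUnion _ (fun C => C ∩ G)]
  · conv_lhs => rw [hUeq]
    rw [hν.biUnion _ (fun C => C) hdisj, Finset.mul_sum]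
    refine Finset.sum_le_sum fun C hC => ?_
    rw [Set.Finite.mem_toFinset] at hC
    obtain ⟨P, hP, rfl⟩ := hC
    exact hε P hP
  · intro C hC C' hC' hne
    exact (hdisj C hC C' hC' hne).mono Set.inter_subset_left Set.inter_subset_left

/-- Structures whose restriction to `insert y X` is the relabelled copy of `B`. -/
def Good (N : ℕ) (X : Finset ℕ) (B : FinStruc L) (y : ℕ) : Set (FinStruc L) :=
  { S | Agree (insert y X).powerset S (mapPerm B (Equiv.swap N y)) }

/-- The bad event. -/
def Bad (K : Set (FinStruc L)) (N : ℕ) (X : Finset ℕ) (B : FinStruc L) (Y : Finset ℕ) :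
    Set (FinStruc L) :=
  { S | S ∈ KNset K N ∧ Agree X.powerset S B ∧ ∀ y ∈ Y, S ∉ Good N X B y }

/-- The family of sets contained in `insert y X` for some `y ∈ Y`, or in `X`. -/
def DY (N : ℕ) (X Y : Finset ℕ) : Finset (Finset ℕ) :=
  (Finset.range N).powerset.filter (fun Z => Z ⊆ X ∨ ∃ y ∈ Y, Z ⊆ insert y X)

theorem DY_lower (N : ℕ) (X Y : Finset ℕ) : IsLowerSet (DY N X Y : Set (Finset ℕ)) := by
  intro Z Z' hZ' hZ
  simp only [DY, Finset.coe_filter, Finset.mem_powerset, Set.mem_setOf_eq] at hZ ⊢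
  refine ⟨hZ'.trans hZ.1, ?_⟩
  rcases hZ.2 with h | ⟨y, hy, h⟩
  · exact Or.inl (hZ'.trans h)
  · exact Or.inr ⟨y, hy, hZ'.trans h⟩

/-- The lower bound for the conditional probability of a good extension. -/
noncomputable def eps (L : FirstOrder.Language.{u, v}) (q : ℕ) : ENNReal :=
  ((cbound L q : ENNReal)⁻¹) ^ (2 ^ q)

theorem cbound_pos (L : FirstOrder.Language.{u, v}) [∀ n, Finite (L.Relations n)] (q : ℕ) :
    0 < cbound L q := Nat.card_pos

theorem mapPerm_agree {N : ℕ} {X : Finset ℕ} {B : FinStruc L} {y : ℕ} (hN : N ∉ X) (hy : y ∉ X) :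
    Agree X.powerset (mapPerm B (Equiv.swap N y)) B := by
  intro n R t ht
  have ht' := img_subset.1 (Finset.mem_powerset.1 ht)
  have : (fun i => (Equiv.swap N y).symm (t i)) = t := by
    funext i
    rw [Equiv.symm_swap]
    refine Equiv.swap_apply_of_ne_of_ne ?_ ?_
    · rintro h; exact hN (h ▸ ht' i)
    · rintro h; exact hy (h ▸ ht' i)
  change (fun i => (Equiv.swap N y).symm (t i)) ∈ B.rel R ↔ _
  rw [this]

theorem key [L.IsRelational] [∀ n, Finite (L.Relations n)] {K : Set (FinStruc L)}
    (hK : IsLocalClass K) {ν : Set (FinStruc L) → ENNReal} (hν : Add0 ν) {N : ℕ}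
    (hform : ∀ (D : Finset (Finset ℕ)), IsLowerSet (D : Set (Finset ℕ)) →
      D ⊆ (Finset.range N).powerset → ∀ P ∈ KNset K N, ν (cyl K N D P) = W K D P)
    {q : ℕ} {X Y : Finset ℕ} {B : FinStruc L} (hX : X ⊆ Finset.range N) (hq : X.card + 1 ≤ q)
    (hB : B ∈ K) (hBc : B.carrier = insert N X) {y : ℕ} (hy : y < N) (hyX : y ∉ X) (hyY : y ∉ Y)
    {P : FinStruc L} (hP : P ∈ Bad K N X B Y) :
    eps L q * ν (cyl K N (DY N X Y) P) ≤ ν (cyl K N (DY N X Y) P ∩ Good N X B y) := by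
  have hNX : N ∉ X := fun h => by simpa using hX h
  set T := mapPerm B (Equiv.swap N y) with hT
  set D := DY N X Y with hDdef
  have hD : IsLowerSet (D : Set (Finset ℕ)) := DY_lower N X Y
  have hDN : D ⊆ (Finset.range N).powerset := Finset.filter_subset _ _
  have hTc : T.carrier = insert y X := by
    change B.carrier.image _ = _
    rw [hBc, Finset.image_insert, Equiv.swap_apply_left]
    congr 1
    ext z
    simp only [Finset.mem_image]
    have hfix : ∀ w ∈ X, Equiv.swap N y w = w := fun w hw =>
      Equiv.swap_apply_of_ne_of_ne (fun h => hNX (h ▸ hw)) (fun h => hyX (h ▸ hw))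
    constructor
    · rintro ⟨w, hw, rfl⟩
      rw [hfix w hw]; exact hw
    · intro hz
      exact ⟨z, hz, hfix z hz⟩
  have hTK : T ∈ K := mapPerm_mem hK hB _
  have hag : Agree (D.filter (· ⊆ T.carrier)) P T := by
    have h1 : Agree X.powerset P T := hP.2.1.trans (mapPerm_agree hNX hyX).symm
    refine h1.mono fun Z hZ => ?_
    rw [hTc, Finset.mem_filter] at hZ
    rw [Finset.mem_powerset]
    rcases (Finset.mem_filter.1 hZ.1).2 with h | ⟨y', hy', h⟩
    · exact h
    · intro z hz
      rcases Finset.mem_insert.1 (h hz) with h2 | h2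
      · rcases Finset.mem_insert.1 (hZ.2 hz) with h3 | h3
        · exact absurd (h3 ▸ h2 ▸ hy') hyY
        · exact h3
      · exact h2
  set Q := glue D P T with hQ
  have hyXN : insert y X ⊆ Finset.range N :=
    Finset.insert_subset (Finset.mem_range.2 hy) hX
  have hQK : Q ∈ KNset K N := by
    refine ⟨glue_mem hK hD hP.1.1 hTK hag, ?_⟩
    change P.carrier ∪ T.carrier = _
    rw [hTc, hP.1.2]
    exact Finset.union_eq_left.2 hyXN
  set D' := D ∪ (insert y X).powerset with hD'
  have hD'low : IsLowerSet (D' : Set (Finset ℕ)) := by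
    rw [hD', Finset.coe_union]
    refine hD.union ?_
    intro Z Z' h hZ
    exact Finset.mem_powerset.2 (h.trans (Finset.mem_powerset.1 hZ))
  have hD'N : D' ⊆ (Finset.range N).powerset :=
    Finset.union_subset hDN (Finset.powerset_mono.2 hyXN)
  have hsub : cyl K N D' Q ⊆ cyl K N D P ∩ Good N X B y := by
    intro S hS
    refine ⟨⟨hS.1, (hS.2.mono Finset.subset_union_left).trans (glue_agree_left hag)⟩, ?_⟩
    have := glue_agree_right hag
    rw [hTc] at this
    exact (hS.2.mono Finset.subset_union_right).trans this
  refine le_trans ?_ (hν.mono hsub)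
  rw [hform D' hD'low hD'N Q hQK, hform D hD hDN P hP.1, W, W,
    ← Finset.prod_sdiff (Finset.subset_union_left : D ⊆ D')]
  change _ * W K D P ≤ _ * W K D Q
  rw [W_congr hD (glue_agree_left hag : Agree D Q P)]
  refine mul_le_mul_left ?_ _
  have hcard : ∀ Z ∈ D' \ D, Z ⊆ insert y X := by
    intro Z hZ
    rw [Finset.mem_sdiff, hD', Finset.mem_union] at hZ
    exact Finset.mem_powerset.1 (hZ.1.resolve_left hZ.2)
  have hc1 : (insert y X).card ≤ q := (Finset.card_insert_le _ _).trans hq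
  have hle1 : (cbound L q : ENNReal)⁻¹ ≤ 1 := by
    rw [ENNReal.inv_le_one]
    exact_mod_cast cbound_pos L q
  calc eps L q ≤ ((cbound L q : ENNReal)⁻¹) ^ (D' \ D).card := by
        refine pow_le_pow_right_of_le_one' hle1 ?_
        have h1 : D' \ D ⊆ (insert y X).powerset := fun Z hZ => Finset.mem_powerset.2 (hcard Z hZ)
        refine (Finset.card_le_card h1).trans ?_
        rw [Finset.card_powerset]
        exact Nat.pow_le_pow_right (by norm_num) hc1
    _ = ∏ Z ∈ D' \ D, (cbound L q : ENNReal)⁻¹ := by rw [Finset.prod_const]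
    _ ≤ ∏ Z ∈ D' \ D, (nn K Q Z : ENNReal)⁻¹ := by
        refine Finset.prod_le_prod' fun Z hZ => ?_
        rw [ENNReal.inv_le_inv]
        exact_mod_cast nn_le hK Q Z q ((Finset.card_le_card (hcard Z hZ)).trans hc1)

theorem bad_le [L.IsRelational] [∀ n, Finite (L.Relations n)] {K : Set (FinStruc L)}
    (hK : IsLocalClass K) {ν : Set (FinStruc L) → ENNReal} (hν : Add0 ν) {N : ℕ}
    (hform : ∀ (D : Finset (Finset ℕ)), IsLowerSet (D : Set (Finset ℕ)) →
      D ⊆ (Finset.range N).powerset → ∀ P ∈ KNset K N, ν (cyl K N D P) = W K D P)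
    (h1 : ν (KNset K N) = 1)
    {q : ℕ} {X : Finset ℕ} {B : FinStruc L} (hX : X ⊆ Finset.range N) (hq : X.card + 1 ≤ q)
    (hB : B ∈ K) (hBc : B.carrier = insert N X) (Y : Finset ℕ) (hY : Y ⊆ Finset.range N \ X) :
    ν (Bad K N X B Y) ≤ (1 - eps L q) ^ Y.card := by
  have hle : ∀ Y, ν (Bad K N X B Y) ≤ 1 := fun Y => h1 ▸ hν.mono fun S hS => hS.1
  induction Y using Finset.induction_on with
  | empty => simpa using hle ∅
  | insert y Y hyY ih =>
    have hy := Finset.mem_sdiff.1 (hY (Finset.mem_insert_self y Y))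
    have ih' := ih ((Finset.subset_insert y Y).trans hY)
    have hE : eps L q * ν (Bad K N X B Y) ≤ ν (Bad K N X B Y ∩ Good N X B y) := by
      refine decomp hK hν (D := DY N X Y) _ _ (fun S hS => hS.1) ?_ _ fun P hP =>
        key hK hν hform hX hq hB hBc (Finset.mem_range.1 hy.1) hy.2 hyY hP
      intro S hS S' hS' hag
      have hXD : X.powerset ⊆ DY N X Y := by
        intro Z hZ
        have := Finset.mem_powerset.1 hZ
        exact Finset.mem_filter.2 ⟨Finset.mem_powerset.2 (this.trans hX), Or.inl this⟩
      refine ⟨hS', (hag.mono hXD).trans hS.2.1, fun y' hy' hg => hS.2.2 y' hy' ?_⟩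
      refine Agree.trans (hag.mono ?_).symm hg
      intro Z hZ
      have h3 := Finset.mem_powerset.1 hZ
      have h4 := Finset.mem_sdiff.1 (hY (Finset.mem_insert_of_mem hy'))
      exact Finset.mem_filter.2 ⟨Finset.mem_powerset.2
        (h3.trans (Finset.insert_subset h4.1 hX)), Or.inr ⟨y', hy', h3⟩⟩
    have hsplit : Bad K N X B Y = (Bad K N X B Y ∩ Good N X B y) ∪ Bad K N X B (insert y Y) := by
      ext S
      constructor
      · intro hS
        by_cases hg : S ∈ Good N X B y
        · exact Or.inl ⟨hS, hg⟩
        · refine Or.inr ⟨hS.1, hS.2.1, fun z hz => ?_⟩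
          rcases Finset.mem_insert.1 hz with rfl | hz
          · exact hg
          · exact hS.2.2 z hz
      · rintro (hS | hS)
        · exact hS.1
        · exact ⟨hS.1, hS.2.1, fun z hz => hS.2.2 z (Finset.mem_insert_of_mem hz)⟩
    have hdis : Disjoint (Bad K N X B Y ∩ Good N X B y) (Bad K N X B (insert y Y)) := by
      rw [Set.disjoint_left]
      intro S hS hS'
      exact hS'.2.2 y (Finset.mem_insert_self _ _) hS.2
    have hsum := hν.union _ _ hdis
    rw [← hsplit] at hsum
    have hfin : ν (Bad K N X B Y) ≠ ⊤ := ((hle Y).trans_lt ENNReal.one_lt_top).ne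
    have heps1 : eps L q ≤ 1 := by
      refine pow_le_one' ?_ _
      rw [ENNReal.inv_le_one]
      exact_mod_cast cbound_pos L q
    have hepsfin : eps L q ≠ ⊤ := (heps1.trans_lt ENNReal.one_lt_top).ne
    have h5 : ν (Bad K N X B (insert y Y)) ≤ (1 - eps L q) * ν (Bad K N X B Y) := by
      rw [ENNReal.sub_mul (fun _ _ => hfin), one_mul]
      refine ENNReal.le_sub_of_add_le_left (ENNReal.mul_ne_top hepsfin hfin) ?_
      conv_rhs => rw [hsum]
      exact add_le_add hE le_rfl
    rw [Finset.card_insert_of_notMem hyY, pow_succ']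
    exact h5.trans (mul_le_mul_right ih' _)

/-- The combinatorial extension property. -/
def ExtProp (K : Set (FinStruc L)) (N q : ℕ) (S : FinStruc L) : Prop :=
  ∀ X : Finset ℕ, X ⊆ Finset.range N → X.card + 1 ≤ q → ∀ B ∈ K, B.carrier = insert N X →
    Agree X.powerset S B → ∃ y ∈ Finset.range N \ X, S ∈ Good N X B y

theorem card_small (N q : ℕ) :
    ((Finset.range N).powerset.filter (fun X => X.card + 1 ≤ q)).card ≤ q * (N + 1) ^ q := by
  have : (Finset.range N).powerset.filter (fun X => X.card + 1 ≤ q) ⊆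
      (Finset.range q).biUnion (fun i => (Finset.range N).powersetCard i) := by
    intro X hX
    simp only [Finset.mem_filter, Finset.mem_powerset] at hX
    simp only [Finset.mem_biUnion, Finset.mem_range, Finset.mem_powersetCard]
    exact ⟨X.card, by omega, hX.1, rfl⟩
  refine (Finset.card_le_card this).trans (Finset.card_biUnion_le.trans ?_)
  have h2 : ∀ i ∈ Finset.range q, ((Finset.range N).powersetCard i).card ≤ (N + 1) ^ q := by
    intro i hi
    rw [Finset.card_powersetCard, Finset.card_range]
    calc N.choose i ≤ N ^ i := Nat.choose_le_pow N i
      _ ≤ (N + 1) ^ i := Nat.pow_le_pow_left (Nat.le_succ N) i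
      _ ≤ (N + 1) ^ q := Nat.pow_le_pow_right (Nat.succ_pos N) (Finset.mem_range.1 hi).le
  simpa using Finset.sum_le_card_nsmul _ _ _ h2

theorem not_ext_le [L.IsRelational] [∀ n, Finite (L.Relations n)] {K : Set (FinStruc L)}
    (hK : IsLocalClass K) {ν : Set (FinStruc L) → ENNReal} (hν : Add0 ν) {N : ℕ}
    (hform : ∀ (D : Finset (Finset ℕ)), IsLowerSet (D : Set (Finset ℕ)) →
      D ⊆ (Finset.range N).powerset → ∀ P ∈ KNset K N, ν (cyl K N D P) = W K D P)
    (h1 : ν (KNset K N) = 1) (q : ℕ) :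
    ν { S | S ∈ KNset K N ∧ ¬ ExtProp K N q S } ≤
      ((q * (N + 1) ^ q * cbound L q : ℕ) : ENNReal) * (1 - eps L q) ^ (N - q) := by
  let 𝓧 := (Finset.range N).powerset.filter (fun X => X.card + 1 ≤ q)
  let 𝓑 : Finset ℕ → Finset (FinStruc L) := fun X => (count_aux hK _ (insert N X) le_rfl).1.toFinset
  have hsub : { S | S ∈ KNset K N ∧ ¬ ExtProp K N q S } ⊆
      ⋃ X ∈ 𝓧, ⋃ B ∈ 𝓑 X, Bad K N X B (Finset.range N \ X) := by
    rintro S ⟨hS, hne⟩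
    simp only [ExtProp, not_forall] at hne
    obtain ⟨X, hX, hq, B, hB, hBc, hag, hno⟩ := hne
    simp only [Set.mem_iUnion]
    refine ⟨X, Finset.mem_filter.2 ⟨Finset.mem_powerset.2 hX, hq⟩, B,
      (Set.Finite.mem_toFinset _).2 ⟨hB, hBc⟩, hS, hag, fun y hy hg => hno ⟨y, hy, hg⟩⟩
  refine (hν.mono hsub).trans ((hν.le_biUnion _ _).trans ?_)
  have hX : ∀ X ∈ 𝓧, ν (⋃ B ∈ 𝓑 X, Bad K N X B (Finset.range N \ X)) ≤
      cbound L q * (1 - eps L q) ^ (N - q) := by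
    intro X hX
    obtain ⟨hX1, hX2⟩ := Finset.mem_filter.1 hX
    rw [Finset.mem_powerset] at hX1
    refine (hν.le_biUnion _ _).trans ?_
    have hB : ∀ B ∈ 𝓑 X, ν (Bad K N X B (Finset.range N \ X)) ≤ (1 - eps L q) ^ (N - q) := by
      intro B hB
      have hB' := (Set.Finite.mem_toFinset _).1 hB
      refine (bad_le hK hν hform h1 hX1 hX2 hB'.1 hB'.2 _ subset_rfl).trans ?_
      refine pow_le_pow_right_of_le_one' tsub_le_self ?_
      rw [Finset.card_sdiff_of_subset hX1, Finset.card_range]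
      omega
    refine (Finset.sum_le_card_nsmul _ _ _ hB).trans ?_
    rw [nsmul_eq_mul]
    refine mul_le_mul_left ?_ _
    have hc := (count_aux hK q (insert N X) ((Finset.card_insert_le _ _).trans hX2)).2
    rw [Set.ncard_eq_toFinset_card _ (count_aux hK _ (insert N X) le_rfl).1] at hc
    exact_mod_cast hc
  refine (Finset.sum_le_card_nsmul _ _ _ hX).trans ?_
  rw [nsmul_eq_mul, ← mul_assoc]
  refine mul_le_mul_left ?_ _
  exact_mod_cast Nat.mul_le_mul_right _ (card_small N q)

theorem tendsto_real (r : ℝ) (hr0 : 0 ≤ r) (hr1 : r < 1) (q : ℕ) (C : ℝ) (hC : 0 ≤ C) :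
    Filter.Tendsto (fun N : ℕ => (C * (N + 1 : ℝ) ^ q) * r ^ (N - q)) Filter.atTop (nhds 0) := by
  set s := max r (1 / 2) with hs
  have hs0 : 0 < s := lt_of_lt_of_le (by norm_num) (le_max_right _ _)
  have hs1 : s < 1 := max_lt hr1 (by norm_num)
  have h1 := tendsto_pow_const_mul_const_pow_of_abs_lt_one q (abs_lt.2 ⟨by linarith, hs1⟩)
  have h2 := (Filter.tendsto_add_atTop_iff_nat 1).2 h1
  have h3 := h2.const_mul (C * (s ^ (q + 1))⁻¹)
  rw [mul_zero] at h3
  refine squeeze_zero' (Filter.Eventually.of_forall fun N => by positivity) ?_ h3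
  filter_upwards [Filter.eventually_ge_atTop q] with N hN
  have h4 : r ^ (N - q) ≤ s ^ (N - q) := pow_le_pow_left₀ hr0 (le_max_left _ _) _
  have h5 : s ^ (N + 1) = s ^ (N - q) * s ^ (q + 1) := by
    rw [← pow_add]; congr 1; omega
  have h6 : s ^ (q + 1) ≠ 0 := by positivity
  calc (C * (N + 1 : ℝ) ^ q) * r ^ (N - q) ≤ (C * (N + 1 : ℝ) ^ q) * s ^ (N - q) := by gcongr
    _ = C * (s ^ (q + 1))⁻¹ * (((N + 1 : ℕ) : ℝ) ^ q * s ^ (N + 1)) := by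
      rw [h5]; push_cast; field_simp

theorem tendsto_bound (L : FirstOrder.Language.{u, v}) [∀ n, Finite (L.Relations n)] (q : ℕ) :
    Filter.Tendsto (fun N : ℕ => ((q * (N + 1) ^ q * cbound L q : ℕ) : ENNReal) *
      (1 - eps L q) ^ (N - q)) Filter.atTop (nhds 0) := by
  have heps : 0 < eps L q := by
    rw [eps, pos_iff_ne_zero]
    exact pow_ne_zero _ (ENNReal.inv_ne_zero.2 (ENNReal.natCast_ne_top _))
  set ρ := 1 - eps L q with hρ
  have hρ1 : ρ < 1 := ENNReal.sub_lt_self ENNReal.one_ne_top one_ne_zero heps.ne'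
  have hρt : ρ ≠ ⊤ := (hρ1.trans ENNReal.one_lt_top).ne
  have hr1 : ρ.toReal < 1 := by
    have := (ENNReal.toReal_lt_toReal hρt ENNReal.one_ne_top).2 hρ1
    simpa using this
  have h := ENNReal.tendsto_ofReal (tendsto_real ρ.toReal ENNReal.toReal_nonneg hr1 q
    (q * cbound L q) (by positivity))
  rw [ENNReal.ofReal_zero] at h
  refine h.congr fun N => ?_
  rw [ENNReal.ofReal_mul (by positivity), ENNReal.ofReal_pow ENNReal.toReal_nonneg,
    ENNReal.ofReal_toReal hρt]
  congr 1
  rw [← ENNReal.ofReal_natCast]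
  congr 1
  push_cast
  ring


/-! ### The Fraïssé limit -/

theorem ultra [L.IsRelational] {R : Type} [L.Structure R] (hR : IsUltrahomogeneous L R) {m : ℕ}
    (u b : Fin m → R) (h : TEquiv (L := L) u b) : ∃ g : R ≃[L] R, ∀ i, g (u i) = b i := by
  let C := Substructure.closure L (Set.range u)
  have hC : ∀ x : C, ∃ i, u i = x := fun x => by
    have := x.2
    rwa [Substructure.mem_closure_iff_of_isRelational] at this
  choose f hf using hC
  have hfb : ∀ (x : C) i, u i = x → b (f x) = b i := fun x i hi =>
    (h.1 _ _).1 ((hf x).trans hi.symm)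
  let e : C ↪[L] R :=
    { toFun := fun x => b (f x)
      inj' := fun x y hxy => Subtype.ext (by
        rw [← hf x, ← hf y]; exact (h.1 _ _).2 hxy)
      map_fun' := fun F => isEmptyElim F
      map_rel' := fun {n} r x => by
        have h1 := h.2 n r (fun i => f (x i))
        have h2 : (fun i => u (f (x i))) = fun i => (x i : R) := funext fun i => hf (x i)
        rw [h2] at h1
        exact h1.symm }
  obtain ⟨g, hg⟩ := hR C (Substructure.fg_closure (Set.finite_range u)) e
  refine ⟨g, fun i => ?_⟩
  have hmem : u i ∈ C := Substructure.subset_closure ⟨i, rfl⟩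
  have h1 : e ⟨u i, hmem⟩ = g (u i) := by rw [hg]; rfl
  rw [← h1]
  exact hfb ⟨u i, hmem⟩ i rfl

theorem forth_fin [L.IsRelational] [Countable (Σ l, L.Functions l)] {K : Set (FinStruc L)}
    {R : Type} [L.Structure R] [Countable R] (hR : IsFraisseLimit (toBundled L K) R)
    {S : FinStruc L} (hS : S ∈ K) (q : ℕ) : Forth L {x : ℕ // x ∈ S.carrier} R q := by
  intro m _ a b h c
  have h1 : (⟨{x : ℕ // x ∈ S.carrier}, S.str⟩ : CategoryTheory.Bundled.{0} L.Structure) ∈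
      L.age R := by
    rw [hR.age]
    exact ⟨S, hS, ⟨FirstOrder.Language.Equiv.refl L _⟩⟩
  obtain ⟨-, ⟨e⟩⟩ := h1
  change {x : ℕ // x ∈ S.carrier} ↪[L] R at e
  obtain ⟨g, hg⟩ := ultra hR.ultrahomogeneous _ b ((TEquiv.embedding a e).symm.trans h)
  refine ⟨g (e c), ?_⟩
  have h2 : (Fin.snoc b (g (e c)) : Fin (m + 1) → R) =
      fun i => (g.toEmbedding.comp e) ((Fin.snoc a c : Fin (m + 1) → {x : ℕ // x ∈ S.carrier}) i) := by
    funext i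
    refine Fin.lastCases ?_ (fun i => ?_) i
    · simp
    · simp [hg]
  rw [h2]
  exact TEquiv.embedding _ _

theorem forth_lim [L.IsRelational] [Countable (Σ l, L.Functions l)] {K : Set (FinStruc L)}
    (hK : IsLocalClass K)
    {R : Type} [L.Structure R] [Countable R] (hR : IsFraisseLimit (toBundled L K) R)
    {N : ℕ} {S : FinStruc L} (hS : S ∈ KNset K N) {q : ℕ} (hext : ExtProp K N q S) :
    Forth L R {x : ℕ // x ∈ S.carrier} q := by
  classical
  intro m hm b a h c
  by_cases hc : ∃ i, b i = c
  · obtain ⟨i, rfl⟩ := hc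
    refine ⟨a i, ?_⟩
    let s : Fin (m + 1) → Fin m := Fin.snoc (fun j => j) i
    have hb : (Fin.snoc b (b i) : Fin (m + 1) → R) = fun j => b (s j) := by
      funext j
      refine Fin.lastCases ?_ (fun j => ?_) j <;> simp [s]
    have ha : (Fin.snoc a (a i) : Fin (m + 1) → {x : ℕ // x ∈ S.carrier}) = fun j => a (s j) := by
      funext j
      refine Fin.lastCases ?_ (fun j => ?_) j <;> simp [s]
    rw [hb, ha]
    exact ⟨fun j k => h.1 _ _, fun k r f => h.2 k r fun j => s (f j)⟩
  · set X : Finset ℕ := img (fun i => (a i : ℕ)) with hXdef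
    have hmemX : ∀ z, z ∈ X ↔ ∃ i, (a i : ℕ) = z := fun z => by simp [hXdef, img]
    have hX : X ⊆ Finset.range N := img_subset.2 fun i => hS.2 ▸ (a i).2
    have hNX : N ∉ X := fun h => by simpa using hX h
    let g : ℕ → R := fun z => if hz : ∃ i, (a i : ℕ) = z then b hz.choose else c
    have hga : ∀ i, g (a i) = b i := by
      intro i
      have hz : ∃ j, (a j : ℕ) = a i := ⟨i, rfl⟩
      simp only [g, hz, dite_true]
      exact (h.1 _ _).2 (Subtype.ext hz.choose_spec)
    have hgc : ∀ z, z ∉ X → g z = c := by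
      intro z hz
      rw [hmemX] at hz
      simp only [g, hz, dite_false]
    have hinj : ∀ z ∈ insert N X, ∀ w ∈ insert N X, g z = g w → z = w := by
      intro z hz w hw hzw
      rw [Finset.mem_insert, hmemX] at hz hw
      rcases hz with rfl | ⟨i, rfl⟩ <;> rcases hw with rfl | ⟨j, rfl⟩
      · rfl
      · rw [hgc _ hNX, hga] at hzw
        exact absurd ⟨j, hzw.symm⟩ hc
      · rw [hgc _ hNX, hga] at hzw
        exact absurd ⟨i, hzw⟩ hc
      · rw [hga, hga] at hzw
        exact congrArg Subtype.val ((h.1 _ _).1 hzw)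
    let B : FinStruc L :=
      { carrier := insert N X
        rel := fun _ r => { t | (∀ i, t i ∈ insert N X) ∧ Structure.RelMap r (fun i => g (t i)) }
        rel_mem := fun _ _ _ ht => ht.1 }
    have hBK : B ∈ K := by
      letI : L.Structure {x : ℕ // x ∈ B.carrier} := B.str
      have hfg : Structure.FG L {x : ℕ // x ∈ B.carrier} := Structure.FG.of_finite
      let emb : {x : ℕ // x ∈ B.carrier} ↪[L] R :=
        { toFun := fun x => g x
          inj' := fun x y hxy => Subtype.ext (hinj x x.2 y y.2 hxy)
          map_fun' := fun F => isEmptyElim F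
          map_rel' := fun {n} r x =>
            ⟨fun hx => ⟨fun i => (x i).2, hx⟩, fun hx => hx.2⟩ }
      have h1 : (⟨{x : ℕ // x ∈ B.carrier}, B.str⟩ : CategoryTheory.Bundled.{0} L.Structure) ∈
          L.age R := ⟨hfg, ⟨emb⟩⟩
      rw [hR.age] at h1
      obtain ⟨A, hA, ⟨e⟩⟩ := h1
      exact mem_of_equiv hK hA e
    have hXcard : X.card + 1 ≤ q := by
      have : X.card ≤ m := by
        rw [hXdef, img]
        simpa using (Finset.card_image_le : (Finset.univ.image (fun i => (a i : ℕ))).card ≤ _)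
      omega
    have hagr : Agree X.powerset S B := by
      intro n r t ht
      have ht' := img_subset.1 (Finset.mem_powerset.1 ht)
      choose f hf using fun i => (hmemX _).1 (ht' i)
      obtain rfl : t = fun i => (a (f i) : ℕ) := funext fun i => (hf i).symm
      have h1 := h.2 n r f
      have h2 : (fun i => b (f i)) = fun i => g (a (f i)) := funext fun i => (hga (f i)).symm
      rw [h2] at h1
      exact ⟨fun hx => ⟨fun i => Finset.mem_insert_of_mem (ht' i), h1.2 hx⟩, fun hx => h1.1 hx.2⟩
    obtain ⟨y, hy, hgood⟩ := hext X hX hXcard B hBK rfl hagr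
    obtain ⟨hyN, hyX⟩ := Finset.mem_sdiff.1 hy
    let y' : {x : ℕ // x ∈ S.carrier} := ⟨y, by rw [hS.2]; exact hyN⟩
    refine ⟨y', ?_⟩
    set a' : Fin (m + 1) → {x : ℕ // x ∈ S.carrier} := Fin.snoc a y' with ha'
    set b' : Fin (m + 1) → R := Fin.snoc b c with hb'
    have haX : ∀ i, (a i : ℕ) ∈ X := fun i => (hmemX _).2 ⟨i, rfl⟩
    have hsw : ∀ j, (Equiv.swap N y).symm (a' j : ℕ) ∈ insert N X ∧
        g ((Equiv.swap N y).symm (a' j : ℕ)) = b' j := by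
      intro j
      rw [Equiv.symm_swap]
      refine Fin.lastCases ?_ (fun i => ?_) j
      · have : (a' (Fin.last m) : ℕ) = y := by simp [ha', y']
        rw [this, Equiv.swap_apply_right]
        exact ⟨Finset.mem_insert_self _ _, by simp [hb', hgc N hNX]⟩
      · have : (a' i.castSucc : ℕ) = a i := by simp [ha']
        have hne1 : (a i : ℕ) ≠ N := fun h => hNX (h ▸ haX i)
        have hne2 : (a i : ℕ) ≠ y := fun h => hyX (h ▸ haX i)
        rw [this, Equiv.swap_apply_of_ne_of_ne hne1 hne2]
        exact ⟨Finset.mem_insert_of_mem (haX i), by simp [hb', hga]⟩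
    have ha'X : ∀ j, (a' j : ℕ) ∈ insert y X := by
      intro j
      refine Fin.lastCases ?_ (fun i => ?_) j
      · simp [ha', y']
      · have : (a' i.castSucc : ℕ) = a i := by simp [ha']
        rw [this]
        exact Finset.mem_insert_of_mem (haX i)
    constructor
    · intro i j
      constructor
      · intro hij
        rw [← (hsw i).2, ← (hsw j).2] at hij
        have := hinj _ (hsw i).1 _ (hsw j).1 hij
        exact Subtype.ext ((Equiv.swap N y).symm.injective this)
      · intro hij
        rw [← (hsw i).2, ← (hsw j).2, hij]
    · intro k r f
      have h1 := hgood k r (fun i => (a' (f i) : ℕ))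
        (Finset.mem_powerset.2 (img_subset.2 fun i => ha'X (f i)))
      have h2 : (fun i => b' (f i)) = fun i => g ((Equiv.swap N y).symm (a' (f i) : ℕ)) :=
        funext fun i => (hsw (f i)).2.symm
      rw [h2]
      exact ⟨fun hx => h1.2 ⟨fun i => (hsw (f i)).1, hx⟩, fun hx => (h1.1 hx).2⟩

theorem no_nullary [L.IsRelational] {K : Set (FinStruc L)} (hK : IsLocalClass K)
    {ν : Set (FinStruc L) → ENNReal} (hν : Add0 ν) {N : ℕ} (h1 : ν (KNset K N) = 1)
    (h0 : ∀ A ∈ K, A.carrier ⊆ Finset.range N → ν (ONset K N A 0) = 1) :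
    IsEmpty (L.Relations 0) := by
  refine ⟨fun r => ?_⟩
  let A : FinStruc L := ⟨∅, fun _ _ => ∅, by simp⟩
  let A' : FinStruc L := ⟨∅, fun n _ => { _t | n = 0 }, by
    intro n R t ht i
    have hn : n = 0 := ht
    subst hn
    exact i.elim0⟩
  have hA := h0 A (mem_of_empty hK A rfl) (Finset.empty_subset _)
  have hA' := h0 A' (mem_of_empty hK A' rfl) (Finset.empty_subset _)
  have hdis : Disjoint (ONset K N A 0) (ONset K N A' 0) := by
    rw [Set.disjoint_left]
    intro S hS hS'
    have h2 : A.frame 0 = A'.frame 0 := hS.2.symm.trans hS'.2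
    have h3 : (Fin.elim0 : Fin 0 → ℕ) ∈ (A'.frame 0).rel r := by
      simp [FinStruc.frame, A']
    rw [← h2] at h3
    simp [FinStruc.frame, A] at h3
  have h2 := hν.union _ _ hdis
  have h3 : ν (ONset K N A 0 ∪ ONset K N A' 0) ≤ 1 :=
    h1 ▸ hν.mono (Set.union_subset (fun S hS => hS.1) (fun S hS => hS.1))
  rw [h2, hA, hA'] at h3
  norm_num at h3

end ZeroOne

open scoped Classical in
/-- The 0-1 law for local classes: for every first-order sentence `φ`, the frame-wise uniform
measure of the set of members of `K^N` satisfying `φ` converges as `N → ∞`, with limit `1` if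
`φ` holds in the Fraïssé limit of `K` and limit `0` otherwise. -/
theorem statement_12 (L : FirstOrder.Language.{u, v}) [L.IsRelational]
    [∀ n, Finite (L.Relations n)] [Countable (Σ l, L.Functions l)]
    (K : Set (FinStruc L)) (hK : IsLocalClass K)
    (R : Type) [L.Structure R] [Countable R] (hR : IsFraisseLimit (toBundled L K) R)
    (μ : ℕ → @MeasureTheory.Measure (FinStruc L) ⊤)
    (hprob : ∀ N, MeasureTheory.IsProbabilityMeasure (μ N))
    (hconc : ∀ N, μ N (KNset K N) = 1)
    (h0 : ∀ N, ∀ A ∈ K, A.carrier ⊆ Finset.range N → μ N (ONset K N A 0) = 1)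
    (hrec : ∀ N, ∀ A ∈ K, A.carrier ⊆ Finset.range N → ∀ k : ℕ,
      μ N (ONset K N A (k + 1)) = μ N (ONset K N A k) / (Ncount K A k : ENNReal))
    (φ : L.Sentence) :
    Filter.Tendsto (fun N => μ N { S | S ∈ KNset K N ∧ S.Sat φ }) Filter.atTop
      (nhds (if R ⊨ φ then (1 : ENNReal) else 0)) := by
  have hν : ∀ N, ZeroOne.Add0 (fun s => μ N s) := by
    intro N
    refine ⟨MeasureTheory.measure_empty, fun s t hst => ?_⟩
    exact @MeasureTheory.measure_union _ ⊤ (μ N) s t hst MeasurableSpace.measurableSet_top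
  have hr0 := ZeroOne.no_nullary hK (hν 0) (hconc 0) (h0 0)
  have hsmall : Filter.Tendsto
      (fun N => μ N { S | S ∈ KNset K N ∧ ¬ ZeroOne.ExtProp K N (ZeroOne.bd φ) S })
      Filter.atTop (nhds 0) := by
    refine tendsto_of_tendsto_of_tendsto_of_le_of_le tendsto_const_nhds
      (ZeroOne.tendsto_bound L (ZeroOne.bd φ)) (fun N => zero_le) (fun N => ?_)
    exact ZeroOne.not_ext_le hK (hν N)
      (fun D hD hDN => ZeroOne.formula hK (hν N) hr0 (h0 N) (hrec N) _ D hD hDN rfl)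
      (hconc N) (ZeroOne.bd φ)
  have htr : ∀ N S, S ∈ KNset K N → ZeroOne.ExtProp K N (ZeroOne.bd φ) S → (S.Sat φ ↔ R ⊨ φ) :=
    fun N S hS hE => ZeroOne.transfer_sentence φ (ZeroOne.forth_fin hR hS.1 _)
      (ZeroOne.forth_lim hK hR hS hE) hr0
  by_cases hφ : R ⊨ φ
  · rw [if_pos hφ]
    have h1 : Filter.Tendsto (fun N => 1 - μ N { S | S ∈ KNset K N ∧
        ¬ ZeroOne.ExtProp K N (ZeroOne.bd φ) S }) Filter.atTop (nhds 1) := by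
      have := ENNReal.Tendsto.sub (tendsto_const_nhds (x := (1 : ENNReal)) (f := Filter.atTop))
        hsmall (Or.inl ENNReal.one_ne_top)
      simpa using this
    refine tendsto_of_tendsto_of_tendsto_of_le_of_le h1 tendsto_const_nhds (fun N => ?_)
      (fun N => ?_)
    · refine tsub_le_iff_right.2 ?_
      rw [← hconc N]
      have hsub : KNset K N ⊆ { S | S ∈ KNset K N ∧ S.Sat φ } ∪ { S | S ∈ KNset K N ∧
          ¬ ZeroOne.ExtProp K N (ZeroOne.bd φ) S } := by
        intro S hS
        by_cases hE : ZeroOne.ExtProp K N (ZeroOne.bd φ) S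
        · exact Or.inl ⟨hS, (htr N S hS hE).2 hφ⟩
        · exact Or.inr ⟨hS, hE⟩
      exact (MeasureTheory.measure_mono hsub).trans (MeasureTheory.measure_union_le _ _)
    · change μ N _ ≤ 1
      rw [← hconc N]
      exact MeasureTheory.measure_mono fun S hS => hS.1
  · rw [if_neg hφ]
    refine tendsto_of_tendsto_of_tendsto_of_le_of_le tendsto_const_nhds hsmall
      (fun N => zero_le) (fun N => ?_)
    exact MeasureTheory.measure_mono fun S hS =>
      ⟨hS.1, fun hE => hφ ((htr N S hS.1 hE).1 hS.2)⟩
end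

section
/- Under the frame-wise uniform measure, almost all finite simplicial complexes have trivial automorphism group: μ_N({S ∈ K_SC^N : Aut(S) is trivial}) converges to 1 as N → ∞. -/
open FirstOrder FirstOrder.Language

universe u v

variable {L : FirstOrder.Language.{u, v}}

/-- The signature of simplicial complexes (with the unary relation `S₀` omitted): one relation
symbol of each arity `n ≥ 2`. -/
def Lsc : FirstOrder.Language where
  Functions := fun _ => Empty
  Relations := fun n =>
    match n with
    | 0 => Empty
    | 1 => Empty
    | _ + 2 => Unit

instance : Lsc.IsRelational := fun _ => inferInstanceAs (IsEmpty Empty)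

instance (n : ℕ) : Finite (Lsc.Relations n) := by
  match n with
  | 0 => exact inferInstanceAs (Finite Empty)
  | 1 => exact inferInstanceAs (Finite Empty)
  | _ + 2 => exact inferInstanceAs (Finite Unit)

/-- A finite `Σ_sc`-structure is a simplicial complex when it satisfies General Irreflexivity,
Symmetry, and Subset Closure. -/
def IsSimplicialFinStruc (A : FinStruc Lsc) : Prop :=
  (∀ ⦃n : ℕ⦄ (R : Lsc.Relations n) (t : Fin n → ℕ), t ∈ A.rel R → Function.Injective t) ∧
  (∀ ⦃n : ℕ⦄ (R : Lsc.Relations n) (σ : _root_.Equiv.Perm (Fin n)) (t : Fin n → ℕ),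
      t ∈ A.rel R → (t ∘ σ) ∈ A.rel R) ∧
  (∀ ⦃n : ℕ⦄ (R : Lsc.Relations (n + 1)) (R' : Lsc.Relations n) (t : Fin (n + 1) → ℕ),
      t ∈ A.rel R → (t ∘ Fin.castSucc) ∈ A.rel R')

/-- The class of finite simplicial complexes. -/
def KSC : Set (FinStruc Lsc) := { A | IsSimplicialFinStruc A }

/-- A finite structure has trivial automorphism group when every self-isomorphism is the
identity on its underlying set. -/
def FinStruc.HasTrivialAut (A : FinStruc L) : Prop :=
  ∀ f : ℕ → ℕ, Set.BijOn f ↑A.carrier ↑A.carrier →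
    (∀ ⦃n : ℕ⦄ (R : L.Relations n) (t : Fin n → ℕ), (∀ i, t i ∈ A.carrier) →
      (t ∈ A.rel R ↔ (fun i => f (t i)) ∈ A.rel R)) →
    ∀ x ∈ A.carrier, f x = x


open Finset in
lemma exists_indep {α : Type*} [Fintype α] [DecidableEq α] (τ : Equiv.Perm α) (Q : α → Prop) :
    ∃ P : Finset α, (∀ x ∈ P, Q x) ∧ (∀ x ∈ P, τ x ∉ P) ∧
      (∀ x, Q x → τ x ≠ x → x ∈ P ∨ τ x ∈ P ∨ τ.symm x ∈ P) := by
  classical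
  let F : Finset (Finset α) :=
    Finset.univ.filter (fun P => (∀ x ∈ P, Q x) ∧ (∀ x ∈ P, τ x ∉ P))
  have hF : F.Nonempty := ⟨∅, by simp [F]⟩
  obtain ⟨P, hP, hmax⟩ := Finset.exists_max_image F Finset.card hF
  have hP' := (Finset.mem_filter.1 hP).2
  refine ⟨P, hP'.1, hP'.2, ?_⟩
  intro x hQ hx
  by_contra! hcon
  obtain ⟨h1, h2, h3⟩ := hcon
  have hin : insert x P ∈ F := by
    refine Finset.mem_filter.2 ⟨Finset.mem_univ _, ?_, ?_⟩
    · intro y hy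
      rcases Finset.mem_insert.1 hy with rfl | hy
      · exact hQ
      · exact hP'.1 y hy
    · intro y hy hy2
      rcases Finset.mem_insert.1 hy with rfl | hy
      · rcases Finset.mem_insert.1 hy2 with h | h
        · exact hx h
        · exact h2 h
      · rcases Finset.mem_insert.1 hy2 with h | h
        · apply h3
          rw [← h]
          simpa using hy
        · exact hP'.2 y hy h
  have := hmax _ hin
  rw [Finset.card_insert_of_notMem h1] at this
  omega

/-- number of ordered pairs over a set of unordered pairs -/
lemma card_pairs_le {V : Type*} [Fintype V] [DecidableEq V] (τ : Equiv.Perm (Sym2 V))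
    (P : Finset (Sym2 V)) :
    (Finset.univ.filter (fun p : V × V => τ s(p.1, p.2) ∈ P)).card ≤ 2 * P.card := by
  have := Finset.card_le_mul_card_image_of_maps_to
    (s := Finset.univ.filter (fun p : V × V => τ s(p.1, p.2) ∈ P)) (t := P)
    (f := fun p => τ s(p.1, p.2)) (by intro p hp; simpa using hp) 2 ?_
  · exact this
  · intro e he
    obtain ⟨e', rfl⟩ := τ.surjective e
    induction e' using Sym2.ind with
    | _ a b =>
      calc _ ≤ ({(a, b), (b, a)} : Finset (V × V)).card := by
            apply Finset.card_le_card
            intro p hp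
            simp only [Finset.mem_filter, EmbeddingLike.apply_eq_iff_eq, Sym2.eq_iff] at hp
            rcases hp.2 with h | h
            · simp [Prod.ext_iff, h.1, h.2]
            · simp [Prod.ext_iff, h.1, h.2]
        _ ≤ 2 := Finset.card_le_two

/-- `G` is fixed by `σ`. -/
def FixedBy {V : Type*} (σ : Equiv.Perm V) (G : SimpleGraph V) : Prop :=
  ∀ a b, G.Adj a b ↔ G.Adj (σ a) (σ b)

open Classical in
lemma card_fixed {N : ℕ} (σ : Equiv.Perm (Fin N)) :
    ∃ p : ℕ, (Finset.univ.filter (fun v => σ v ≠ v)).card * (N - 2) ≤ 6 * p ∧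
      (Finset.univ.filter (fun G : SimpleGraph (Fin N) => FixedBy σ G)).card * 2 ^ p
        ≤ Fintype.card (SimpleGraph (Fin N)) := by
  let τ : Equiv.Perm (Sym2 (Fin N)) := 
    ⟨Sym2.map σ, Sym2.map σ.symm, fun e => by simp [Sym2.map_map], fun e => by simp [Sym2.map_map]⟩
  have hτ : ∀ a b, τ s(a, b) = s(σ a, σ b) := fun a b => rfl
  obtain ⟨P, hPQ, hP1, hP2⟩ := exists_indep τ (fun e => ¬ e.IsDiag)
  refine ⟨P.card, ?_, ?_⟩
  · let D : Finset (Σ _ : (Fin N), (Fin N)) := (Finset.univ.filter (fun v => σ v ≠ v)).sigma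
      (fun v => Finset.univ \ {v, σ v})
    have hD : (Finset.univ.filter (fun v => σ v ≠ v)).card * (N - 2) ≤ D.card := by
      rw [Finset.card_sigma, ← smul_eq_mul, ← Finset.sum_const]
      apply Finset.sum_le_sum
      intro v hv
      have h1 := Finset.le_card_sdiff ({v, σ v} : Finset (Fin N)) Finset.univ
      have h2 : ({v, σ v} : Finset (Fin N)).card ≤ 2 := Finset.card_le_two
      rw [Finset.card_univ, Fintype.card_fin] at h1
      omega
    refine hD.trans ?_
    have h1 := card_pairs_le (Equiv.refl _) P
    have h2 := card_pairs_le τ P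
    have h3 := card_pairs_le τ.symm P
    set A1 := (Finset.univ.filter (fun p : (Fin N) × (Fin N) => (Equiv.refl (Sym2 (Fin N))) s(p.1, p.2) ∈ P)) with hA1
    set A2 := (Finset.univ.filter (fun p : (Fin N) × (Fin N) => τ s(p.1, p.2) ∈ P)) with hA2
    set A3 := (Finset.univ.filter (fun p : (Fin N) × (Fin N) => τ.symm s(p.1, p.2) ∈ P)) with hA3
    have h4 : D.card ≤ (A1 ∪ (A2 ∪ A3)).card := by
      apply Finset.card_le_card_of_injOn (fun p => (p.1, p.2))
      · rintro ⟨a, b⟩ hab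
        simp only [D, Finset.coe_sigma, Set.mem_sigma_iff, Finset.mem_coe, Finset.mem_filter,
          Finset.mem_univ, true_and, Finset.mem_sdiff, Finset.mem_insert, Finset.mem_singleton,
          not_or] at hab
        obtain ⟨h, hb1, hb2⟩ := hab
        have := hP2 s(a, b) (by simpa using fun h => hb1 h.symm) (by
          rw [hτ, Ne, Sym2.eq_iff]
          rintro (⟨h', -⟩ | ⟨h', -⟩)
          · exact h h'
          · exact hb2 h'.symm)
        simp only [Finset.coe_union, Set.mem_union, Finset.mem_coe, hA1, hA2, hA3,
          Finset.mem_filter, Finset.mem_univ, true_and, Equiv.refl_apply]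
        rcases this with h | h
        · left
          exact Finset.mem_filter.2 ⟨Finset.mem_univ _, h⟩
        · right
          exact h
      · rintro ⟨a, b⟩ _ ⟨c, d⟩ _ h
        simp only [Prod.mk.injEq] at h
        obtain ⟨rfl, rfl⟩ := h
        rfl
    have h5 := Finset.card_union_le A1 (A2 ∪ A3)
    have h6 := Finset.card_union_le A2 A3
    omega
  · rw [← Finset.card_powerset, ← Finset.card_product, ← Finset.card_univ]
    apply Finset.card_le_card_of_injOn
      (fun x => SimpleGraph.fromEdgeSet (symmDiff x.1.edgeSet (x.2 : Set (Sym2 (Fin N)))))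
    · intro x _
      simp
    · rintro ⟨G, T⟩ hG ⟨G', T'⟩ hG' h
      simp only [Finset.coe_product, Set.mem_prod, Finset.mem_coe, Finset.mem_filter,
        Finset.mem_univ, true_and, Finset.mem_powerset] at hG hG'
      have key : ∀ e : Sym2 (Fin N), ¬ e.IsDiag →
          ((e ∈ G.edgeSet ∧ e ∉ T ∨ e ∈ T ∧ e ∉ G.edgeSet) ↔
            (e ∈ G'.edgeSet ∧ e ∉ T' ∨ e ∈ T' ∧ e ∉ G'.edgeSet)) := by
        intro e he
        have h' := congrArg (fun H : SimpleGraph (Fin N) => e ∈ H.edgeSet) h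
        simpa [SimpleGraph.edgeSet_fromEdgeSet, Set.mem_symmDiff, he] using h'
      have inv : ∀ (H : SimpleGraph (Fin N)), FixedBy σ H → ∀ e, e ∈ H.edgeSet ↔ τ e ∈ H.edgeSet := by
        intro H hH e
        induction e using Sym2.ind with
        | _ a b => rw [hτ, SimpleGraph.mem_edgeSet, SimpleGraph.mem_edgeSet]; exact hH a b
      have out : ∀ e, ¬ e.IsDiag → e ∉ P → (e ∈ G.edgeSet ↔ e ∈ G'.edgeSet) := by
        intro e he heP
        have h1 : e ∉ T := fun h => heP (hG.2 h)
        have h2 : e ∉ T' := fun h => heP (hG'.2 h)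
        have := key e he
        tauto
      have diagτ : ∀ e : Sym2 (Fin N), ¬ e.IsDiag → ¬ (τ e).IsDiag := by
        intro e
        induction e using Sym2.ind with
        | _ a b => rw [hτ]; simp
      have all : ∀ e, ¬ e.IsDiag → (e ∈ G.edgeSet ↔ e ∈ G'.edgeSet) := by
        intro e he
        by_cases heP : e ∈ P
        · rw [inv G hG.1, inv G' hG'.1]
          exact out _ (diagτ e he) (hP1 e heP)
        · exact out e he heP
      have hGG : G = G' := by
        ext a b
        by_cases hab : a = b
        · subst hab; simp
        · exact all s(a, b) (by simpa using hab)
      subst hGG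
      have hTT : T = T' := by
        ext e
        constructor
        · intro he
          have := key e (hPQ e (hG.2 he))
          tauto
        · intro he
          have := key e (hPQ e (hG'.2 he))
          tauto
      rw [hTT]

open Classical in
lemma sum_perm_le (N : ℕ) (x : ℝ) (hx : 0 ≤ x) :
    ∑ σ ∈ (Finset.univ : Finset (Equiv.Perm (Fin N))).erase 1,
      x ^ (Finset.univ.filter (fun v => σ v ≠ v)).card ≤ (1 + N * x) ^ N - 1 := by
  have h1 : ∑ σ : Equiv.Perm (Fin N), x ^ (Finset.univ.filter (fun v => σ v ≠ v)).card
      ≤ ∑ f : Fin N → Fin N, ∏ i, (if f i = i then 1 else x) := by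
    have : ∀ σ : Equiv.Perm (Fin N), x ^ (Finset.univ.filter (fun v => σ v ≠ v)).card
        = ∏ i, (if (σ : Fin N → Fin N) i = i then 1 else x) := by
      intro σ
      rw [Finset.prod_ite]
      simp
    simp_rw [this]
    rw [← Finset.sum_image (s := Finset.univ) (g := fun σ : Equiv.Perm (Fin N) => (σ : Fin N → Fin N))
      (f := fun f : Fin N → Fin N => ∏ i, (if f i = i then 1 else x))
      (fun a _ b _ h => DFunLike.coe_injective h)]
    apply Finset.sum_le_sum_of_subset_of_nonneg (Finset.subset_univ _)
    intro f _ _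
    apply Finset.prod_nonneg
    intro i _
    split_ifs <;> linarith
  have h2 : ∑ f : Fin N → Fin N, ∏ i, (if f i = i then 1 else x)
      ≤ (1 + N * x) ^ N := by
    have := Finset.prod_univ_sum (fun _ : Fin N => (Finset.univ : Finset (Fin N)))
      (fun i j => if j = i then (1:ℝ) else x)
    rw [Fintype.piFinset_univ] at this
    rw [← this]
    calc _ ≤ ∏ i : Fin N, (1 + N * x) := by
          apply Finset.prod_le_prod
          · intro i _
            apply Finset.sum_nonneg
            intro j _
            split_ifs <;> linarith
          · intro i _
            calc ∑ j : Fin N, (if j = i then (1:ℝ) else x) 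
                ≤ ∑ j : Fin N, ((if j = i then (1:ℝ) else 0) + x) := by
                  apply Finset.sum_le_sum
                  intro j _
                  split_ifs <;> linarith
              _ = 1 + N * x := by
                  rw [Finset.sum_add_distrib]; simp
      _ = _ := by simp
  have h3 := Finset.add_sum_erase (Finset.univ : Finset (Equiv.Perm (Fin N)))
    (fun σ => x ^ (Finset.univ.filter (fun v => σ v ≠ v)).card) (Finset.mem_univ 1)
  simp only [Equiv.Perm.coe_one, id_eq, ne_eq, not_true_eq_false, Finset.filter_false,
    Finset.card_empty, pow_zero] at h3
  simp only [ne_eq] at h1 ⊢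
  linarith

open Classical in
/-- graphs with a nontrivial automorphism -/
noncomputable def badGraphs (N : ℕ) : Finset (SimpleGraph (Fin N)) :=
  Finset.univ.filter (fun G => ∃ σ : Equiv.Perm (Fin N), σ ≠ 1 ∧ FixedBy σ G)

noncomputable def errBound (N : ℕ) : ℝ := (1 + N * (1/2 : ℝ) ^ ((N - 2) / 6)) ^ N - 1

open Classical in
lemma card_bad (N : ℕ) :
    ((badGraphs N).card : ℝ) ≤ errBound N * Fintype.card (SimpleGraph (Fin N)) := by
  have h1 : badGraphs N ⊆ ((Finset.univ : Finset (Equiv.Perm (Fin N))).erase 1).biUnion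
      (fun σ => Finset.univ.filter (fun G => FixedBy σ G)) := by
    intro G hG
    obtain ⟨σ, h, h'⟩ := (Finset.mem_filter.1 hG).2
    exact Finset.mem_biUnion.2 ⟨σ, by simpa using h, by simpa using h'⟩
  have h2 := (Finset.card_le_card h1).trans Finset.card_biUnion_le
  have h3 : ((badGraphs N).card : ℝ) ≤ ∑ σ ∈ (Finset.univ : Finset (Equiv.Perm (Fin N))).erase 1,
      ((Finset.univ.filter (fun G : SimpleGraph (Fin N) => FixedBy σ G)).card : ℝ) := by
    exact_mod_cast h2
  refine h3.trans ?_
  refine le_trans ?_ (mul_le_mul_of_nonneg_right (sum_perm_le N ((1/2 : ℝ) ^ ((N - 2) / 6))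
    (by positivity)) (by positivity))
  rw [Finset.sum_mul]
  apply Finset.sum_le_sum
  intro σ _
  obtain ⟨p, hp1, hp2⟩ := card_fixed σ
  set m := (Finset.univ.filter (fun v => σ v ≠ v)).card
  have hp : (N - 2) / 6 * m ≤ p := by
    have : 6 * ((N - 2) / 6) ≤ N - 2 := Nat.mul_div_le _ _
    have : m * (6 * ((N - 2) / 6)) ≤ m * (N - 2) := Nat.mul_le_mul_left _ this
    have h7 : m * (6 * ((N - 2) / 6)) = 6 * ((N - 2) / 6 * m) := by ring
    omega
  have hp3 : ((Finset.univ.filter (fun G : SimpleGraph (Fin N) => FixedBy σ G)).card : ℝ) * 2 ^ p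
      ≤ Fintype.card (SimpleGraph (Fin N)) := by exact_mod_cast hp2
  rw [← pow_mul]
  calc _ ≤ (1/2 : ℝ) ^ p * Fintype.card (SimpleGraph (Fin N)) := by
        rw [one_div, inv_pow, inv_mul_eq_div, le_div_iff₀ (by positivity)]
        exact hp3
    _ ≤ _ := by
        apply mul_le_mul_of_nonneg_right _ (by positivity)
        exact pow_le_pow_of_le_one (by norm_num) (by norm_num) hp

open Filter Topology in
lemma errBound_tendsto : Tendsto errBound atTop (𝓝 0) := by
  have hq : Tendsto (fun N : ℕ => (N - 2) / 6) atTop atTop := by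
    apply tendsto_atTop.2
    intro b
    filter_upwards [eventually_ge_atTop (6 * b + 2)] with N hN
    omega
  have h1 : Tendsto (fun q : ℕ => (64 : ℝ) * ((q:ℝ) ^ 2 * (1/2 : ℝ) ^ q) + 128 * ((q:ℝ) ^ 1 * (1/2 : ℝ) ^ q)
      + 64 * ((q:ℝ) ^ 0 * (1/2 : ℝ) ^ q)) atTop (𝓝 (64 * 0 + 128 * 0 + 64 * 0)) := by
    refine ((Tendsto.const_mul _ ?_).add (Tendsto.const_mul _ ?_)).add (Tendsto.const_mul _ ?_) <;>
    exact tendsto_pow_const_mul_const_pow_of_abs_lt_one _ (by rw [abs_of_pos] <;> norm_num)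
  have h2 := h1.comp hq
  have h3 := (Real.continuous_exp.tendsto _).comp h2
  have h4 := h3.sub_const 1
  simp only [mul_zero, add_zero, Real.exp_zero, sub_self] at h4
  refine tendsto_of_tendsto_of_tendsto_of_le_of_le tendsto_const_nhds h4 ?_ ?_
  · intro N
    simp only [errBound, sub_nonneg]
    apply one_le_pow₀
    have : (0:ℝ) ≤ N * (1/2 : ℝ) ^ ((N - 2) / 6) := by positivity
    linarith
  · intro N
    simp only [errBound, Function.comp]
    apply sub_le_sub_right
    set q := (N - 2) / 6 with hqd
    have hN : (N : ℝ) ≤ 8 * (q + 1) := by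
      have : N ≤ 8 * (q + 1) := by omega
      exact_mod_cast this
    calc (1 + N * (1/2 : ℝ) ^ q) ^ N ≤ (Real.exp (N * (1/2 : ℝ) ^ q)) ^ N := by
          apply pow_le_pow_left₀ (by positivity)
          rw [add_comm]; exact Real.add_one_le_exp _
      _ = Real.exp (N ^ 2 * (1/2 : ℝ) ^ q) := by
          rw [← Real.exp_nat_mul]; congr 1; ring
      _ ≤ _ := by
          apply Real.exp_le_exp.2
          have h5 : (N : ℝ) ^ 2 ≤ 64 * q ^ 2 + 128 * q + 64 := by nlinarith [Nat.cast_nonneg (α := ℝ) N]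
          have := mul_le_mul_of_nonneg_right h5 (show (0:ℝ) ≤ (1/2 : ℝ) ^ q by positivity)
          simp only [pow_zero, pow_one, one_mul]
          linarith

/-- The 1-dimensional complex of a graph. -/
def graphStruc {N : ℕ} (G : SimpleGraph (Fin N)) : FinStruc Lsc where
  carrier := Finset.range N
  rel := fun n _ => {t | n = 2 ∧ ∃ a b : Fin N, G.Adj a b ∧
    ∀ k : Fin n, t k = if k.val = 0 then a.val else b.val}
  rel_mem := by
    rintro n R t ⟨-, a, b, -, h⟩ i
    rw [h i]
    split_ifs <;> simp

lemma graphStruc_mem {N : ℕ} (G : SimpleGraph (Fin N)) : graphStruc G ∈ KSC := by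
  refine ⟨?_, ?_, ?_⟩
  · rintro n R t ⟨rfl, a, b, hab, h⟩ i j hij
    have hne : a.val ≠ b.val := fun h => hab.ne (Fin.ext h)
    rw [h i, h j] at hij
    fin_cases i <;> fin_cases j <;> simp_all
  · rintro n R σ t ⟨rfl, a, b, hab, h⟩
    refine ⟨rfl, ?_⟩
    have h01 : σ 0 ≠ σ 1 := fun h => by simpa using σ.injective h
    by_cases h0 : σ 0 = 0
    · have h1 : σ 1 = 1 := by omega
      refine ⟨a, b, hab, ?_⟩
      intro k
      fin_cases k <;> simp [h, h0, h1]
    · have h0 : σ 0 = 1 := by omega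
      have h1 : σ 1 = 0 := by omega
      refine ⟨b, a, hab.symm, ?_⟩
      intro k
      fin_cases k <;> simp [h, h0, h1]
  · rintro n R R' t ⟨h2, -⟩
    have : n = 1 := by omega
    subst this
    exact (show Empty from R').elim

lemma graphStruc_frame {N : ℕ} (G G' : SimpleGraph (Fin N)) (k : ℕ) (hk : k ≤ 1) :
    (graphStruc G).frame k = (graphStruc G').frame k := by
  have : ((graphStruc G).frame k).rel = ((graphStruc G').frame k).rel := by
    funext n R
    by_cases h : n ≤ k
    · have : n = 0 ∨ n = 1 := by omega
      rcases this with rfl | rfl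
      · exact (show Empty from R).elim
      · exact (show Empty from R).elim
    · simp [FinStruc.frame, h]
  simp only [FinStruc.frame, FinStruc.mk.injEq] at this ⊢
  exact ⟨rfl, this⟩

lemma graphStruc_Ncount {N : ℕ} (G G' : SimpleGraph (Fin N)) (k : ℕ) (hk : k ≤ 1) :
    Ncount KSC (graphStruc G) k = Ncount KSC (graphStruc G') k := by
  unfold Ncount KsetFr
  rw [graphStruc_frame G G' k hk]
  rfl

/-- The binary relation symbol. -/
def R2 : Lsc.Relations 2 := ()

lemma mem_graphStruc {N : ℕ} (G : SimpleGraph (Fin N)) (a b : Fin N) :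
    ![a.val, b.val] ∈ (graphStruc G).rel R2 ↔ G.Adj a b := by
  constructor
  · rintro ⟨-, c, d, hcd, h⟩
    have h0 := h 0
    have h1 := h 1
    simp only [Matrix.cons_val_zero, Matrix.cons_val_one, Fin.val_zero, Fin.val_one,
      if_true, one_ne_zero, if_false] at h0 h1
    rw [Fin.ext h0, Fin.ext h1]
    exact hcd
  · intro h
    refine ⟨rfl, a, b, h, ?_⟩
    intro k
    fin_cases k <;> simp

/-- The graph (2-frame) of a complex. -/
def underGraph (N : ℕ) (S : FinStruc Lsc) (hS : S ∈ KSC) : SimpleGraph (Fin N) where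
  Adj a b := ![a.val, b.val] ∈ S.rel R2
  symm := ⟨fun a b h => by
    have := hS.2.1 R2 (Equiv.swap 0 1) _ h
    convert this using 1
    funext k
    fin_cases k <;> simp⟩
  loopless := ⟨fun a h => by
    have := hS.1 R2 _ h
    have h01 := @this 0 1 (by simp)
    simp at h01⟩

lemma mem_ON_underGraph {N : ℕ} {S : FinStruc Lsc} (hS : S ∈ KNset KSC N) :
    S ∈ ONset KSC N (graphStruc (underGraph N S hS.1)) 2 := by
  refine ⟨hS, ?_⟩
  have hc : S.carrier = Finset.range N := hS.2
  have hrel : ((S.frame 2).restrict (Finset.range N)).rel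
      = ((graphStruc (underGraph N S hS.1)).frame 2).rel := by
    funext n R
    by_cases h : n ≤ 2
    · have : n = 0 ∨ n = 1 ∨ n = 2 := by omega
      rcases this with rfl | rfl | rfl
      · exact (show Empty from R).elim
      · exact (show Empty from R).elim
      · have hR : R = R2 := rfl
        subst hR
        ext t
        have ht : t = ![t 0, t 1] := by
          funext k; fin_cases k <;> simp
        simp only [FinStruc.frame, FinStruc.restrict, le_refl, if_true, Set.mem_setOf_eq]
        constructor
        · rintro ⟨h1, h2⟩
          have e0 := Finset.mem_range.1 (h2 0)
          have e1 := Finset.mem_range.1 (h2 1)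
          rw [ht]
          refine (mem_graphStruc _ ⟨t 0, e0⟩ ⟨t 1, e1⟩).2 ?_
          show ![t 0, t 1] ∈ S.rel R2
          rw [← ht]; exact h1
        · intro h1
          have h2 := (graphStruc (underGraph N S hS.1)).rel_mem R2 t h1
          refine ⟨?_, h2⟩
          have e0 := Finset.mem_range.1 (h2 0)
          have e1 := Finset.mem_range.1 (h2 1)
          rw [ht] at h1
          have := (mem_graphStruc (underGraph N S hS.1) ⟨t 0, e0⟩ ⟨t 1, e1⟩).1 h1
          rw [ht]; exact this
    · ext t; simp [FinStruc.frame, FinStruc.restrict, h]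
  have hcar : ((S.frame 2).restrict (Finset.range N)).carrier
      = ((graphStruc (underGraph N S hS.1)).frame 2).carrier := by
    simp [FinStruc.frame, FinStruc.restrict, graphStruc, hc]
  have ext' : ∀ A B : FinStruc Lsc, A.carrier = B.carrier → A.rel = B.rel → A = B := by
    rintro ⟨c, r, h⟩ ⟨c', r', h'⟩ h1 h2
    simp only at h1 h2
    subst h1 h2
    rfl
  exact ext' _ _ hcar hrel

lemma ON_disjoint {N : ℕ} {S : FinStruc Lsc} (G G' : SimpleGraph (Fin N))
    (h : S ∈ ONset KSC N (graphStruc G) 2) (h' : S ∈ ONset KSC N (graphStruc G') 2) : G = G' := by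
  have h1 : (graphStruc G).frame 2 = (graphStruc G').frame 2 := h.2.symm.trans h'.2
  have h2 : ((graphStruc G).frame 2).rel R2 = ((graphStruc G').frame 2).rel R2 := by rw [h1]
  simp only [FinStruc.frame, le_refl, if_true] at h2
  ext a b
  rw [← mem_graphStruc, ← mem_graphStruc, h2]

open Classical in
lemma bad_of_not_trivial {N : ℕ} {S : FinStruc Lsc} (hS : S ∈ KNset KSC N)
    (h : ¬ S.HasTrivialAut) : underGraph N S hS.1 ∈ badGraphs N := by
  unfold FinStruc.HasTrivialAut at h
  push Not at h
  obtain ⟨f, hf, hrel, x, hx, hfx⟩ := h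
  have hc : S.carrier = Finset.range N := hS.2
  rw [hc] at hf hx
  have hmap : ∀ a : Fin N, f a.val < N := fun a =>
    Finset.mem_range.1 (hf.mapsTo (by simp : a.val ∈ ((Finset.range N : Finset ℕ) : Set ℕ)))
  let g : Fin N → Fin N := fun a => ⟨f a, hmap a⟩
  have hg : Function.Injective g := by
    intro a b hab
    apply Fin.ext
    exact hf.injOn (by simp) (by simp) (Fin.ext_iff.1 hab)
  let σ : Equiv.Perm (Fin N) := Equiv.ofBijective g (Finite.injective_iff_bijective.1 hg)
  unfold badGraphs
  refine Finset.mem_filter.2 ⟨Finset.mem_univ _, σ, ?_, ?_⟩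
  · intro h1
    apply hfx
    have := congrArg (fun τ : Equiv.Perm (Fin N) => (τ ⟨x, Finset.mem_range.1 hx⟩).val) h1
    exact this
  · intro a b
    have h1 := hrel R2 ![a.val, b.val] (by
      intro i; rw [hc]; fin_cases i <;> simp)
    have h2 : (fun i => f (![a.val, b.val] i)) = ![f a.val, f b.val] := by
      funext k; fin_cases k <;> simp
    rw [h2] at h1
    exact h1

/-- Under the frame-wise uniform measure, almost all finite simplicial complexes have trivial
automorphism group. -/
theorem statement_13
    (μ : ℕ → @MeasureTheory.Measure (FinStruc Lsc) ⊤)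
    (hprob : ∀ N, MeasureTheory.IsProbabilityMeasure (μ N))
    (hconc : ∀ N, μ N (KNset KSC N) = 1)
    (h0 : ∀ N, ∀ A ∈ KSC, A.carrier ⊆ Finset.range N → μ N (ONset KSC N A 0) = 1)
    (hrec : ∀ N, ∀ A ∈ KSC, A.carrier ⊆ Finset.range N → ∀ k : ℕ,
      μ N (ONset KSC N A (k + 1)) = μ N (ONset KSC N A k) / (Ncount KSC A k : ENNReal)) :
    Filter.Tendsto (fun N => μ N { S | S ∈ KNset KSC N ∧ S.HasTrivialAut }) Filter.atTop
      (nhds (1 : ENNReal)) := by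
  classical
  letI : MeasurableSpace (FinStruc Lsc) := ⊤
  have hmeas : ∀ s : Set (FinStruc Lsc), MeasurableSet s := fun s => trivial
  -- constant mass of the fibres
  have hmass : ∀ N, ∀ G : SimpleGraph (Fin N), μ N (ONset KSC N (graphStruc G) 2)
      ≤ (Fintype.card (SimpleGraph (Fin N)) : ENNReal)⁻¹ := by
    intro N G
    have heq : ∀ G' : SimpleGraph (Fin N), μ N (ONset KSC N (graphStruc G') 2)
        = μ N (ONset KSC N (graphStruc G) 2) := by
      intro G'
      have hs : (graphStruc G').carrier ⊆ Finset.range N := fun _ h => h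
      have hs' : (graphStruc G).carrier ⊆ Finset.range N := fun _ h => h
      rw [hrec N _ (graphStruc_mem G') hs 1, hrec N _ (graphStruc_mem G) hs' 1,
        hrec N _ (graphStruc_mem G') hs 0, hrec N _ (graphStruc_mem G) hs' 0,
        h0 N _ (graphStruc_mem G') hs, h0 N _ (graphStruc_mem G) hs',
        graphStruc_Ncount G' G 0 (by norm_num), graphStruc_Ncount G' G 1 (by norm_num)]
    have hsum : ∑ G' : SimpleGraph (Fin N), μ N (ONset KSC N (graphStruc G') 2) ≤ 1 := by
      rw [← MeasureTheory.measure_biUnion_finset]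
      · exact MeasureTheory.prob_le_one
      · intro G1 _ G2 _ hne
        refine Set.disjoint_left.2 fun S hS1 hS2 => hne (ON_disjoint G1 G2 hS1 hS2)
      · intro _ _; exact hmeas _
    simp only [heq, Finset.sum_const, Finset.card_univ, nsmul_eq_mul] at hsum
    rw [ENNReal.le_inv_iff_mul_le, mul_comm]
    exact hsum
  have hbad : ∀ N, μ N { S | S ∈ KNset KSC N ∧ S.HasTrivialAut }ᶜ
      ≤ ENNReal.ofReal (errBound N) := by
    intro N
    have hsub : { S | S ∈ KNset KSC N ∧ S.HasTrivialAut }ᶜ ⊆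
        (KNset KSC N)ᶜ ∪ ⋃ G ∈ badGraphs N, ONset KSC N (graphStruc G) 2 := by
      intro S hS
      by_cases hK : S ∈ KNset KSC N
      · right
        have hnt : ¬ S.HasTrivialAut := fun h => hS ⟨hK, h⟩
        exact Set.mem_biUnion (bad_of_not_trivial hK hnt) (mem_ON_underGraph hK)
      · left; exact hK
    have hcomp : μ N (KNset KSC N)ᶜ = 0 := by
      rw [MeasureTheory.prob_compl_eq_zero_iff (hmeas _)]
      exact hconc N
    calc _ ≤ _ := MeasureTheory.measure_mono hsub
      _ ≤ μ N (KNset KSC N)ᶜ + μ N (⋃ G ∈ badGraphs N, ONset KSC N (graphStruc G) 2) :=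
          MeasureTheory.measure_union_le _ _
      _ ≤ 0 + ∑ G ∈ badGraphs N, μ N (ONset KSC N (graphStruc G) 2) := by
          rw [hcomp]
          gcongr
          exact MeasureTheory.measure_biUnion_finset_le _ _
      _ ≤ ∑ G ∈ badGraphs N, (Fintype.card (SimpleGraph (Fin N)) : ENNReal)⁻¹ := by
          rw [zero_add]
          exact Finset.sum_le_sum fun G _ => hmass N G
      _ = ((badGraphs N).card : ENNReal) / (Fintype.card (SimpleGraph (Fin N)) : ENNReal) := by
          rw [Finset.sum_const, nsmul_eq_mul, div_eq_mul_inv]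
      _ ≤ ENNReal.ofReal (errBound N) := by
          apply ENNReal.div_le_of_le_mul
          rw [← ENNReal.ofReal_natCast, ← ENNReal.ofReal_natCast,
            ← ENNReal.ofReal_mul' (Nat.cast_nonneg _)]
          exact ENNReal.ofReal_le_ofReal (card_bad N)
  have hlim : Filter.Tendsto (fun N => μ N { S | S ∈ KNset KSC N ∧ S.HasTrivialAut }ᶜ)
      Filter.atTop (nhds 0) := by
    refine tendsto_of_tendsto_of_tendsto_of_le_of_le tendsto_const_nhds
      (h := fun N => ENNReal.ofReal (errBound N)) ?_ (fun _ => zero_le) hbad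
    simpa using ENNReal.tendsto_ofReal errBound_tendsto
  have heq : ∀ N, μ N { S | S ∈ KNset KSC N ∧ S.HasTrivialAut }
      = 1 - μ N { S | S ∈ KNset KSC N ∧ S.HasTrivialAut }ᶜ := by
    intro N
    rw [← MeasureTheory.prob_compl_eq_one_sub (hmeas _), compl_compl]
  simp only [heq]
  have := ENNReal.Tendsto.sub (tendsto_const_nhds (x := (1 : ENNReal)) (f := Filter.atTop (α := ℕ)))
    hlim (Or.inl ENNReal.one_ne_top)
  simpa using this
end
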